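/- Let T be a sound, recursively axiomatized extension of elementary arithmetic. There is a limit-recursive (i.e., recursive in the halting problem but not recursive) monotone function g on arithmetic sentences such that g(φ) is a Π₁ sentence for every φ, yet for arbitrarily strong true sentences φ (cofinally in the ultrafilter of true sentences ordered by implication over T) [φ ∧ g(φ)]_T = [φ ∧ Con_T(φ)]_T, and for arbitrarily strong true sentences φ, [φ ∧ g(φ)]_T = [φ]_T. -/

import Mathlib

open FirstOrder FirstOrder.Language

namespace ArithFormalization

/-- Function symbols of the first-order language of arithmetic: `0`, successor, `+`, `·`. -/
inductive Func : ℕ → Type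
  | zero : Func 0
  | succ : Func 1
  | add : Func 2
  | mul : Func 2
  deriving DecidableEq

/-- Relation symbols of the first-order language of arithmetic: `≤`. -/
inductive Rel : ℕ → Type
  | le : Rel 2
  deriving DecidableEq

/-- The first-order language of arithmetic. -/
def L : Language := ⟨Func, Rel⟩

/-- The standard model of arithmetic: `ℕ` as an `L`-structure. -/
instance natStructure : L.Structure ℕ where
  funMap {n} f v :=
    match f with
    | .zero => 0
    | .succ => v 0 + 1
    | .add => v 0 + v 1
    | .mul => v 0 * v 1
  RelMap {n} r v :=
    match r with
    | .le => v 0 ≤ v 1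

instance : Encodable (Σ n, L.Functions n) :=
  Encodable.ofEquiv (Fin 4)
    { toFun := fun x =>
        match x with
        | ⟨_, .zero⟩ => 0
        | ⟨_, .succ⟩ => 1
        | ⟨_, .add⟩ => 2
        | ⟨_, .mul⟩ => 3
      invFun := ![⟨0, .zero⟩, ⟨1, .succ⟩, ⟨2, .add⟩, ⟨2, .mul⟩]
      left_inv := by rintro ⟨_, f⟩ <;> cases f <;> rfl
      right_inv := by decide }

instance : Encodable (Σ n, L.Relations n) :=
  Encodable.ofEquiv (Fin 1)
    { toFun := fun _ => 0
      invFun := ![⟨2, .le⟩]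
      left_inv := by rintro ⟨_, r⟩ <;> cases r <;> rfl
      right_inv := by decide }

/-- Sentences of the language of arithmetic. -/
abbrev Sent : Type := L.Sentence

/-- A canonical Gödel numbering of sentences of arithmetic. -/
def gnum (φ : Sent) : ℕ :=
  Encodable.encode (BoundedFormula.listEncode φ)

/-- `φ` is true in the standard model `ℕ`. -/
def TrueInN (φ : Sent) : Prop := ℕ ⊨ φ

/-- `Prov T φ`: `φ` is provable from the theory `T` (by Gödel's completeness theorem,
provability coincides with semantic consequence). -/
def Prov (T : L.Theory) (φ : Sent) : Prop := T ⊨ᵇ φ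

/-- `Implies T φ ψ`: `φ` implies `ψ` over `T`, i.e. `T + φ ⊢ ψ`. -/
def Implies (T : L.Theory) (φ ψ : Sent) : Prop := Prov (T ∪ {φ}) ψ

/-- `φ` strictly implies `ψ` over `T`. -/
def StrictlyImplies (T : L.Theory) (φ ψ : Sent) : Prop :=
  Implies T φ ψ ∧ ¬ Implies T ψ φ

/-- The theory `T + φ` is consistent. -/
def ConsistentWith (T : L.Theory) (φ : Sent) : Prop := ¬ Implies T φ ⊥

/-- `[φ]_T = [ψ]_T`: `φ` and `ψ` are `T`-provably equivalent. -/
def EquivMod (T : L.Theory) (φ ψ : Sent) : Prop := Prov T (φ ⇔ ψ)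

/-- The theory `T` is sound, i.e. all of its axioms are true in `ℕ`. -/
def Sound (T : L.Theory) : Prop := ∀ φ ∈ T, TrueInN φ

/-- The theory `T` is recursively axiomatized: membership of (Gödel codes of) axioms
is decided by a total recursive function. -/
def RecursivelyAxiomatized (T : L.Theory) : Prop :=
  ∃ f : ℕ → Bool, Computable f ∧ ∀ φ : Sent, (φ ∈ T ↔ f (gnum φ) = true)

/-- A function on sentences is recursive if it is computed by a total recursive
function on Gödel codes. -/
def RecursiveFn (g : Sent → Sent) : Prop :=
  ∃ f : ℕ → ℕ, Computable f ∧ ∀ φ : Sent, f (gnum φ) = gnum (g φ)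

/-- `g` is monotone over `T`: if `T ⊢ φ → ψ` then `T ⊢ g(φ) → g(ψ)`. -/
def Monotone' (T : L.Theory) (g : Sent → Sent) : Prop :=
  ∀ φ ψ : Sent, Prov T (φ ⟹ ψ) → Prov T (g φ ⟹ g ψ)

/-- The atomic formula `t ≤ u`. -/
def leF {n : ℕ} (t u : L.Term (Empty ⊕ Fin n)) : L.BoundedFormula Empty n :=
  Relations.boundedFormula₂ (Rel.le : L.Relations 2) t u

/-- `Δ₀` (bounded) formulas of arithmetic: built from atomic formulas by propositional
connectives and bounded quantification `∀ x ≤ t`, `∃ x ≤ t`. -/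
inductive IsDelta0 : ∀ {n : ℕ}, L.BoundedFormula Empty n → Prop
  | falsum {n} : IsDelta0 (n := n) ⊥
  | equal {n} (t u : L.Term (Empty ⊕ Fin n)) : IsDelta0 (t.bdEqual u)
  | le {n} (t u : L.Term (Empty ⊕ Fin n)) : IsDelta0 (leF t u)
  | imp {n} {φ ψ : L.BoundedFormula Empty n} :
      IsDelta0 φ → IsDelta0 ψ → IsDelta0 (φ.imp ψ)
  | ball {n} (t : L.Term (Empty ⊕ Fin n)) {φ : L.BoundedFormula Empty (n + 1)} :
      IsDelta0 φ →
      IsDelta0 (((leF (Term.var (Sum.inr (Fin.last n)))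
        (t.relabel (Sum.map id Fin.castSucc))).imp φ).all)
  | bex {n} (t : L.Term (Empty ⊕ Fin n)) {φ : L.BoundedFormula Empty (n + 1)} :
      IsDelta0 φ →
      IsDelta0 (((leF (Term.var (Sum.inr (Fin.last n)))
        (t.relabel (Sum.map id Fin.castSucc))) ⊓ φ).ex)

/-- `φ` is a `Π₁` sentence: a block of universal quantifiers followed by a `Δ₀` matrix. -/
def IsPi1 (φ : Sent) : Prop :=
  ∃ (n : ℕ) (θ : L.BoundedFormula Empty n), IsDelta0 θ ∧ φ = θ.alls

/-- `φ` is a `Σ₁` sentence: a block of existential quantifiers followed by a `Δ₀` matrix. -/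
def IsSigma1 (φ : Sent) : Prop :=
  ∃ (n : ℕ) (θ : L.BoundedFormula Empty n), IsDelta0 θ ∧ φ = θ.exs

/-- Close the last `m` free variables of a bounded formula by universal quantifiers. -/
def allsFrom : ∀ (n m : ℕ), L.BoundedFormula Empty (n + m) → L.BoundedFormula Empty n
  | _, 0, φ => φ
  | n, m + 1, φ => allsFrom n m φ.all

/-- `φ` is a `Σ₂` sentence: `∃-block ∀-block Δ₀`. -/
def IsSigma2 (φ : Sent) : Prop :=
  ∃ (n m : ℕ) (θ : L.BoundedFormula Empty (n + m)), IsDelta0 θ ∧ φ = (allsFrom n m θ).exs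

/-- Hypotheses making `ea` a correct stand-in for elementary arithmetic `EA`:
it is sound, recursively axiomatized, and proves every true `Σ₁` sentence. -/
structure IsEA (ea : L.Theory) : Prop where
  sound : Sound ea
  recAx : RecursivelyAxiomatized ea
  sigma1_complete : ∀ φ : Sent, IsSigma1 φ → TrueInN φ → Prov ea φ

/-- Hypotheses making `con` a correct stand-in for the arithmetized consistency operator
`φ ↦ Con_T(φ)` (`Con` of the theory `T + φ`): each value is `Π₁`, its truth in `ℕ`
expresses exactly the consistency of `T + φ`, consistency statements are `T`-provably
antitone in the strength of `φ`, and Gödel's second incompleteness theorem holds for it. -/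
structure IsConOperator (T : L.Theory) (con : Sent → Sent) : Prop where
  pi1 : ∀ φ, IsPi1 (con φ)
  true_iff : ∀ φ, TrueInN (con φ) ↔ ConsistentWith T φ
  prov_mono : ∀ φ ψ, Implies T φ ψ → Prov T (con φ ⟹ con ψ)
  goedel2 : ∀ φ, ConsistentWith T φ → ¬ Implies T φ (con φ)


/-- The theory `T` is consistent. -/
def Consistent (T : L.Theory) : Prop := ¬ Prov T ⊥

/-!
There is a limit computable chain `τ 0, τ 1, …` of true `Π₁` sentences, descending over `T`, that
is cofinal among the true `Π₁` sentences: conjoin, in the order of their codes, all `Π₁` sentences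
consistent with `T`. They are true by `Σ₁`-completeness, and consistency with `T` is a `Π₁`
property, hence limit decidable. By Gödel's second theorem no consistent `φ` implies the whole
chain; let `j` be the first index with `T + φ ⊬ τ j`. The operator returns `τ (j - 1)` if some `ζ`
with code below `j`, consistent with `τ j`, gives `T + ζ + τ j ⊢ φ`, and `τ j` otherwise. Both `j`
and, for fixed `j`, the absence of such a `ζ` are monotone in `φ`, and therefore so is the operator.

* For `φ = χ ∧ τ (j - 1)` with `j` beyond the code of `χ`, the sentence `ζ = χ` is such a witness,
  so `τ (j - 1)` is chosen, which `φ` implies already.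
* Starting from a true `χ`, let `τ j` be the first element not implied by `χ ∧ ¬Con(χ)`, and
  strengthen `χ` to `χ' = χ ∧ τ (j - 1) ∧ (Con(χ) → τ j)`. Then let
  `φ = χ' ∧ (τ j → Con(χ' ∧ ¬τ j) ∧ σ)`, where `σ` is the conjunction of `Con(ζ ∧ τ j)` over the
  consistent `ζ ∧ τ j` with `ζ` of code below `j`. By Gödel's second theorem `σ` rules out every
  witness `ζ`, so `τ j` is chosen, and `φ` proves `τ j ↔ Con(φ)`.

Replacing values by equivalent `Π₁` sentences diagonalizes against all recursive functions.

Provability being semantic consequence here, the recursive enumerability of `T ⊢ φ` is obtained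
from compactness: `T + φ` has a model if and only if a certain `Π⁰₁` class of Henkin valuations is
nonempty.
-/

/-! ### Limit computability -/

section LimitComputability

open Filter Encodable

variable {α β γ σ : Type*} [Primcodable α] [Primcodable β] [Primcodable γ] [Primcodable σ]

/-- Limit computability in the sense of Shoenfield: `f` is the pointwise limit of a computable
sequence of functions. By the limit lemma this is computability relative to the halting
problem. -/
def LimitComputable (f : α → σ) : Prop :=
  ∃ F : ℕ → α → σ, Computable₂ F ∧ ∀ a, ∀ᶠ m in atTop, F m a = f a

/-- A predicate whose characteristic function is limit computable, i.e. a `Δ₂` predicate. -/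
def LimitDecidable (p : α → Prop) : Prop :=
  ∃ f : α → Bool, LimitComputable f ∧ ∀ a, f a = true ↔ p a

namespace LimitComputable

theorem of_computable {f : α → σ} (hf : Computable f) : LimitComputable f :=
  ⟨fun _ => f, hf.comp Computable.snd, fun _ => .of_forall fun _ => rfl⟩

theorem of_primrec {f : α → σ} (hf : Primrec f) : LimitComputable f :=
  of_computable hf.to_comp

theorem comp {f : β → σ} {g : α → β} (hf : LimitComputable f) (hg : LimitComputable g) :
    LimitComputable fun a => f (g a) := by
  obtain ⟨F, hF, limF⟩ := hf
  obtain ⟨G, hG, limG⟩ := hg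
  refine ⟨fun m a => F m (G m a), hF.comp Computable.fst hG, fun a => ?_⟩
  filter_upwards [limG a, limF (g a)] with m hGm hFm
  rw [hGm, hFm]

theorem pair {f : α → β} {g : α → γ} (hf : LimitComputable f) (hg : LimitComputable g) :
    LimitComputable fun a => (f a, g a) := by
  obtain ⟨F, hF, limF⟩ := hf
  obtain ⟨G, hG, limG⟩ := hg
  refine ⟨fun m a => (F m a, G m a), Computable.pair hF hG, fun a => ?_⟩
  filter_upwards [limF a, limG a] with m hFm hGm
  rw [hFm, hGm]

theorem comp₂ {f : β → γ → σ} {g : α → β} {h : α → γ} (hf : Computable₂ f)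
    (hg : LimitComputable g) (hh : LimitComputable h) : LimitComputable fun a => f (g a) (h a) :=
  (of_computable hf).comp (hg.pair hh)

theorem cond {c : α → Bool} {f g : α → σ} (hc : LimitComputable c) (hf : LimitComputable f)
    (hg : LimitComputable g) : LimitComputable fun a => bif c a then f a else g a := by
  have select : Computable fun x : Bool × σ × σ => bif x.1 then x.2.1 else x.2.2 :=
    Computable.cond .fst (Computable.fst.comp .snd) (Computable.snd.comp .snd)
  exact (of_computable select).comp (hc.pair (hf.pair hg))

theorem ite {p : α → Prop} [DecidablePred p] {f g : α → σ} (hp : LimitDecidable p)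
    (hf : LimitComputable f) (hg : LimitComputable g) :
    LimitComputable fun a => if p a then f a else g a := by
  obtain ⟨c, hc, hcp⟩ := hp
  convert hc.cond hf hg using 2 with a
  by_cases h : p a
  · simp [h, (hcp a).2 h]
  · simp [h, Bool.eq_false_iff.2 fun h' => h ((hcp a).1 h')]

theorem nat_rec {f : α → σ} {h : α × ℕ × σ → σ} (hf : LimitComputable f)
    (hh : LimitComputable h) :
    LimitComputable fun x : α × ℕ =>
      (Nat.rec (f x.1) (fun k y => h (x.1, k, y)) x.2 : σ) := by
  obtain ⟨F, hF, limF⟩ := hf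
  obtain ⟨H, hH, limH⟩ := hh
  refine ⟨fun m x => Nat.rec (F m x.1) (fun k y => H m (x.1, k, y)) x.2, ?_, ?_⟩
  · exact Computable.nat_rec (f := fun z : ℕ × α × ℕ => z.2.2)
      (g := fun z => F z.1 z.2.1) (h := fun z y => H z.1 (z.2.1, y.1, y.2))
      (Computable.snd.comp .snd) (hF.comp .fst (Computable.fst.comp .snd))
      (hH.comp (Computable.fst.comp .fst)
        ((Computable.fst.comp (Computable.snd.comp .fst)).pair .snd))
  · rintro ⟨a, n⟩
    induction n with
    | zero => exact limF a
    | succ n ih =>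
      filter_upwards [ih, limH (a, n, Nat.rec (f a) (fun k y => h (a, k, y)) n)] with m ihm hHm
      exact (congrArg (fun y => H m (a, n, y)) ihm).trans hHm

theorem of_isLeast {p : α → ℕ → Prop} (hp : LimitDecidable fun x : α × ℕ => p x.1 x.2)
    {f : α → ℕ} (hf : ∀ a, IsLeast {n | p a n} (f a)) : LimitComputable f := by
  obtain ⟨c, ⟨C, hC, limC⟩, hcp⟩ := hp
  refine ⟨fun m a => Nat.rec 0 (fun _ r => bif C m (a, r) then r else r + 1) m, ?_, fun a => ?_⟩
  · have counter : Computable fun z : (ℕ × α) × ℕ × ℕ => z.2.2 := Computable.snd.comp .snd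
    exact Computable.nat_rec (f := fun z : ℕ × α => z.1) (g := fun _ => 0)
      (h := fun z y => bif C z.1 (z.2, y.2) then y.2 else y.2 + 1) .fst (.const 0)
      (Computable.cond (hC.comp (Computable.fst.comp .fst)
        ((Computable.snd.comp .fst).pair counter)) counter (Computable.succ.comp counter))
  have agree : ∀ᶠ m in atTop, ∀ k ≤ f a, C m (a, k) = c (a, k) :=
    (Set.finite_Iic (f a)).eventually_all.2 fun k _ => limC (a, k)
  filter_upwards [agree, eventually_ge_atTop (f a)] with m hm hle
  have search (k : ℕ) :
      (Nat.rec 0 (fun _ r => bif C m (a, r) then r else r + 1) k : ℕ) = min k (f a) := by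
    induction k with
    | zero => simp
    | succ k ih =>
      simp only [ih, hm _ (min_le_right _ _)]
      rcases Nat.lt_or_ge k (f a) with h | h
      · have : c (a, k) = false := Bool.eq_false_iff.2 fun hc => h.not_ge ((hf a).2 ((hcp _).1 hc))
        rw [min_eq_left h.le, this, min_eq_left h, cond_false]
      · rw [min_eq_right h, (hcp (a, f a)).2 (hf a).1, min_eq_right (h.trans k.le_succ), cond_true]
  rw [search m, min_eq_right hle]

end LimitComputable

namespace LimitDecidable

theorem of_iff {p q : α → Prop} (hp : LimitDecidable p) (h : ∀ a, q a ↔ p a) :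
    LimitDecidable q :=
  hp.imp fun _ hf => ⟨hf.1, fun a => (hf.2 a).trans (h a).symm⟩

theorem of_computable {f : α → Bool} (hf : Computable f) : LimitDecidable fun a => f a = true :=
  ⟨f, .of_computable hf, fun _ => Iff.rfl⟩

theorem of_primrecPred {p : α → Prop} (hp : PrimrecPred p) : LimitDecidable p := by
  obtain ⟨_, hp⟩ := hp
  exact (of_computable hp.to_comp).of_iff fun _ => (decide_eq_true_iff).symm

theorem comp {p : β → Prop} {g : α → β} (hp : LimitDecidable p) (hg : LimitComputable g) :
    LimitDecidable fun a => p (g a) :=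
  hp.elim fun f hf => ⟨fun a => f (g a), hf.1.comp hg, fun a => hf.2 (g a)⟩

protected theorem not {p : α → Prop} (hp : LimitDecidable p) : LimitDecidable fun a => ¬ p a :=
  hp.elim fun f hf => ⟨fun a => !f a, (LimitComputable.of_primrec Primrec.not).comp hf.1,
    fun a => by simp [← hf.2 a]⟩

protected theorem and {p q : α → Prop} (hp : LimitDecidable p) (hq : LimitDecidable q) :
    LimitDecidable fun a => p a ∧ q a := by
  obtain ⟨f, hf, hfp⟩ := hp
  obtain ⟨g, hg, hgq⟩ := hq
  exact ⟨fun a => f a && g a, .comp₂ Primrec.and.to_comp hf hg,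
    fun a => by rw [Bool.and_eq_true, hfp, hgq]⟩

protected theorem imp {p q : α → Prop} (hp : LimitDecidable p) (hq : LimitDecidable q) :
    LimitDecidable fun a => p a → q a :=
  (hp.and hq.not).not.of_iff fun _ => by tauto

theorem forall_lt {p : α → ℕ → Prop} (hp : LimitDecidable fun x : α × ℕ => p x.1 x.2) :
    LimitDecidable fun x : α × ℕ => ∀ k < x.2, p x.1 k := by
  obtain ⟨c, hc, hcp⟩ := hp
  have step : LimitComputable fun z : α × ℕ × Bool => z.2.2 && c (z.1, z.2.1) :=
    .comp₂ Primrec.and.to_comp (.of_computable (Computable.snd.comp .snd))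
      (hc.comp (.of_computable (Computable.fst.pair (Computable.fst.comp .snd))))
  refine ⟨_, .nat_rec (.of_computable (.const true)) step, ?_⟩
  rintro ⟨a, n⟩
  induction n with
  | zero => simp
  | succ n ih =>
    dsimp only at ih ⊢
    rw [Bool.and_eq_true, ih, hcp, Nat.forall_lt_succ_right]

/-- At stage `m`, search among the first `m` candidates. -/
theorem exists_nat_of_computable {f : α → ℕ → Bool} (hf : Computable₂ f) :
    LimitDecidable fun a => ∃ k, f a k = true := by
  let search (m : ℕ) (a : α) : Bool := Nat.rec false (fun k r => r || f a k) m
  have search_iff (m : ℕ) (a : α) : search m a = true ↔ ∃ k < m, f a k = true := by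
    induction m with
    | zero => simp [search]
    | succ m ih => rw [Nat.exists_lt_succ_right, ← ih, ← Bool.or_eq_true]
  have hsearch : Computable₂ search :=
    Computable.nat_rec (h := fun (z : ℕ × α) (y : ℕ × Bool) => y.2 || f z.2 y.1) .fst (.const false)
      (Primrec.or.to_comp.comp (Computable.snd.comp .snd)
        (hf.comp (Computable.snd.comp .fst) (Computable.fst.comp .snd)))
  classical
  refine ⟨fun a => decide (∃ k, f a k = true), ⟨search, hsearch, fun a => ?_⟩, by simp⟩
  by_cases h : ∃ k, f a k = true
  · obtain ⟨k, hk⟩ := h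
    filter_upwards [eventually_gt_atTop k] with m hm
    rw [decide_eq_true ⟨k, hk⟩, search_iff]
    exact ⟨k, hm, hk⟩
  · filter_upwards with m
    rw [decide_eq_false h, Bool.eq_false_iff, Ne, search_iff]
    exact fun ⟨k, _, hk⟩ => h ⟨k, hk⟩

theorem exists_of_computable {f : α → β → Bool} (hf : Computable₂ f) :
    LimitDecidable fun a => ∃ b, f a b = true := by
  let found (a : α) (k : ℕ) : Bool := (decode (α := β) k).elim false (f a)
  have hfound : Computable₂ found :=
    (Computable.option_casesOn (Computable.decode.comp .snd) (.const false)
      (hf.comp (Computable.fst.comp .fst) .snd).to₂).of_eq fun x => by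
        dsimp only [found]
        cases decode (α := β) x.2 <;> rfl
  refine (exists_nat_of_computable hfound).of_iff fun a => ⟨fun ⟨b, hb⟩ => ⟨encode b, ?_⟩, ?_⟩
  · simpa [found] using hb
  · rintro ⟨k, hk⟩
    dsimp only [found] at hk
    cases h : decode (α := β) k with
    | none => simp [h] at hk
    | some b => exact ⟨b, by simpa [h] using hk⟩

theorem exists_mem {o : γ → Option β} {q : γ → β → Prop} (ho : Computable o)
    (hq : LimitDecidable fun x : γ × β => q x.1 x.2) :
    LimitDecidable fun c => ∃ b ∈ o c, q c b := by
  obtain ⟨f, ⟨F, hF, limF⟩, hfq⟩ := hq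
  have onSome : Computable₂ fun (m : ℕ) (c : γ) =>
      (Option.casesOn (o c) false fun b => F m (c, b) : Bool) :=
    Computable.option_casesOn (ho.comp .snd) (.const false)
      (hF.comp (Computable.fst.comp .fst) ((Computable.snd.comp .fst).pair .snd)).to₂
  refine ⟨fun c => Option.casesOn (o c) false fun b => f (c, b), ⟨_, onSome, fun c => ?_⟩,
    fun c => ?_⟩
  · dsimp only
    cases o c with
    | none => exact .of_forall fun _ => rfl
    | some b => exact limF (c, b)
  · dsimp only
    cases o c with
    | none => simp
    | some b => simpa using hfq (c, b)

theorem exists_choice [Inhabited β] {r : α → β → Prop}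
    (hr : LimitDecidable fun x : α × β => r x.1 x.2) (htotal : ∀ a, ∃ b, r a b) :
    ∃ f : α → β, LimitComputable f ∧ ∀ a, r a (f a) := by
  let codes (a : α) : Set ℕ := {n | ∃ b ∈ decode (α := β) n, r a b}
  have nonempty (a : α) : (codes a).Nonempty :=
    (htotal a).elim fun b hb => ⟨encode b, b, encodek b, hb⟩
  have hcodes : LimitDecidable fun x : α × ℕ => ∃ b ∈ decode (α := β) x.2, r x.1 b :=
    exists_mem (Computable.decode.comp .snd)
      (hr.comp (.of_computable ((Computable.fst.comp .fst).pair .snd)))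
  have hleast : LimitComputable fun a => sInf (codes a) :=
    .of_isLeast hcodes fun a => ⟨Nat.sInf_mem (nonempty a), fun _ => Nat.sInf_le⟩
  refine ⟨fun a => (decode (sInf (codes a))).getD default, ?_, fun a => ?_⟩
  · exact (LimitComputable.of_computable
      (Computable.option_getD Computable.decode (.const default))).comp hleast
  · obtain ⟨b, hb, hrb⟩ := Nat.sInf_mem (nonempty a)
    simpa [Option.mem_def.1 hb] using hrb

end LimitDecidable

theorem LimitComputable.exists_leftInverse [Inhabited α] {e : α → β}
    (he : Computable e) (hinj : e.Injective) :
    ∃ d : β → α, LimitComputable d ∧ Function.LeftInverse d e := by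
  classical
  have fiber : Computable₂ fun (b : β) (a : α) => decide (e a = b) :=
    (PrimrecRel.decide Primrec.eq).to_comp.comp (he.comp .snd) .fst
  have hrange : LimitDecidable fun b => ∃ a, decide (e a = b) = true :=
    .exists_of_computable fiber
  obtain ⟨d, hd, hdr⟩ := LimitDecidable.exists_choice
    (r := fun b a => (∃ a, decide (e a = b) = true) → decide (e a = b) = true)
    ((hrange.comp (.of_computable .fst)).imp (.of_computable fiber)) fun b => by
      by_cases h : ∃ a, decide (e a = b) = true
      · exact h.imp fun a ha _ => ha
      · exact ⟨default, fun h' => absurd h' h⟩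
  exact ⟨d, hd, fun a => hinj (of_decide_eq_true (hdr (e a) ⟨a, decide_eq_true rfl⟩))⟩

end LimitComputability

/-! ### Codes of terms and formulas -/

/-- Raw arithmetical terms. They are untyped: the variables are not bounded by a context, which
makes them countable in a primitive recursive way. -/
inductive PreTerm : Type
  | zero : PreTerm
  | var (i : ℕ) : PreTerm
  | succ (t : PreTerm) : PreTerm
  | add (t u : PreTerm) : PreTerm
  | mul (t u : PreTerm) : PreTerm
  deriving DecidableEq

/-- Raw arithmetical formulas. Falsum and the atoms carry the number `n` of variables of their
context, as do the constructors of `FirstOrder.Language.BoundedFormula`; `all` binds the last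
variable. -/
inductive PreFormula : Type
  | falsum (n : ℕ) : PreFormula
  | equal (n : ℕ) (t u : PreTerm) : PreFormula
  | le (n : ℕ) (t u : PreTerm) : PreFormula
  | imp (p q : PreFormula) : PreFormula
  | all (p : PreFormula) : PreFormula

section Codes

open Encodable Denumerable

variable {β σ : Type*} [Primcodable β] [Primcodable σ]

theorem primrec₂_of_child_rec {f : β → ℕ → σ} {child : ℕ → ℕ} {h : β × ℕ → σ × σ × σ → σ}
    (hzero : Primrec fun b => f b 0) (hchild : Primrec child) (hlt : ∀ c, child c ≤ c - 1)
    (hh : Primrec₂ h)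
    (hf : ∀ b c, f b c =
      h (b, c) (f b (child c), f b (child c).unpair.1, f b (child c).unpair.2)) :
    Primrec₂ f := by
  let value (x : β × List σ) (i : ℕ) : σ := x.2[i]?.getD (f x.1 0)
  have hvalue : Primrec₂ value :=
    Primrec.option_getD.comp (Primrec.list_getElem?.comp (Primrec.snd.comp .fst) .snd)
      (hzero.comp (Primrec.fst.comp .fst))
  have hlength : Primrec fun x : β × List σ => x.2.length := Primrec.list_length.comp .snd
  have hunpair := Primrec.unpair.comp (hchild.comp hlength)
  refine Primrec.nat_strong_rec f
    (g := fun b l => some (h (b, l.length) (value (b, l) (child l.length),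
      value (b, l) (child l.length).unpair.1, value (b, l) (child l.length).unpair.2)))
    (Primrec.option_some.comp (hh.comp (Primrec.fst.pair hlength)
      ((hvalue.comp .id (hchild.comp hlength)).pair
        ((hvalue.comp .id (Primrec.fst.comp hunpair)).pair
          (hvalue.comp .id (Primrec.snd.comp hunpair)))))) fun b c => ?_
  have value_eq (i : ℕ) (hi : i ≤ child c) : value (b, (List.range c).map (f b)) i = f b i := by
    have := hlt c
    rcases Nat.eq_zero_or_pos c with rfl | hc
    · simp [value, show i = 0 by omega]
    · simp [value, show i < c by omega]
  simp only [List.length_map, List.length_range]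
  rw [value_eq _ le_rfl, value_eq _ (Nat.unpair_left_le _), value_eq _ (Nat.unpair_right_le _),
    ← hf]

namespace PreTerm

/-- The code of a term; the summand before the last `1` is the index of the head symbol. -/
def toNat : PreTerm → ℕ
  | zero => 0
  | var i => 4 * i + 0 + 1
  | succ t => 4 * t.toNat + 1 + 1
  | add t u => 4 * Nat.pair t.toNat u.toNat + 2 + 1
  | mul t u => 4 * Nat.pair t.toNat u.toNat + 3 + 1

/-- The term with a given code. -/
def ofNat : ℕ → PreTerm
  | 0 => zero
  | c + 1 =>
    have := Nat.unpair_left_le (c / 4)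
    have := Nat.unpair_right_le (c / 4)
    if c % 4 = 0 then var (c / 4)
    else if c % 4 = 1 then succ (ofNat (c / 4))
    else if c % 4 = 2 then add (ofNat (c / 4).unpair.1) (ofNat (c / 4).unpair.2)
    else mul (ofNat (c / 4).unpair.1) (ofNat (c / 4).unpair.2)
termination_by c => c
decreasing_by all_goals omega

theorem ofNat_toNat (t : PreTerm) : ofNat t.toNat = t := by
  induction t <;>
    simp [toNat, ofNat, Nat.add_div_of_dvd_right, Nat.add_mod, *]

theorem toNat_ofNat (c : ℕ) : (ofNat c).toNat = c := by
  induction c using Nat.strong_induction_on with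
  | _ c ih =>
    match c with
    | 0 => rw [ofNat, toNat]
    | c + 1 =>
      have hl := Nat.unpair_left_le (c / 4)
      have hr := Nat.unpair_right_le (c / 4)
      rw [ofNat]
      split_ifs
      · rw [toNat]; omega
      · rw [toNat, ih _ (by omega)]; omega
      all_goals
        rw [toNat, ih _ (by omega), ih _ (by omega), Nat.pair_unpair]; omega

instance : Denumerable PreTerm :=
  .mk' ⟨toNat, ofNat, ofNat_toNat, toNat_ofNat⟩

theorem primrec_var : Primrec var :=
  Primrec.encode_iff.1 (Primrec.succ.comp (Primrec.nat_mul.comp (.const 4) .id))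

theorem primrec_succ : Primrec succ :=
  Primrec.encode_iff.1 (Primrec.succ.comp
    (Primrec.nat_add.comp (Primrec.nat_mul.comp (.const 4) .encode) (.const 1)))

theorem primrec_add : Primrec₂ add :=
  Primrec.encode_iff.1 (Primrec.succ.comp
    (Primrec.nat_add.comp (Primrec.nat_mul.comp (.const 4) .encode) (.const 2)))

theorem primrec_mul : Primrec₂ mul :=
  Primrec.encode_iff.1 (Primrec.succ.comp
    (Primrec.nat_add.comp (Primrec.nat_mul.comp (.const 4) .encode) (.const 3)))

theorem primrec₂_rec {f : β → PreTerm → σ} {s : σ → σ} {a m : σ × σ → σ}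
    (hzero : Primrec fun b => f b zero) (hvar : Primrec₂ fun b i => f b (var i))
    (hs : Primrec s) (ha : Primrec a) (hm : Primrec m)
    (hf_succ : ∀ b t, f b (succ t) = s (f b t))
    (hf_add : ∀ b t u, f b (add t u) = a (f b t, f b u))
    (hf_mul : ∀ b t u, f b (mul t u) = m (f b t, f b u)) : Primrec₂ f := by
  suffices hofNat : Primrec₂ fun b c => f b (ofNat c) by
    refine (hofNat.comp .fst (Primrec.encode.comp .snd)).of_eq fun x => ?_
    exact congrArg (f x.1) (ofNat_toNat x.2)
  let h (x : β × ℕ) (y : σ × σ × σ) : σ :=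
    if x.2 = 0 then f x.1 zero else if x.2.pred % 4 = 0 then f x.1 (var (x.2.pred / 4)) else
    if x.2.pred % 4 = 1 then s y.1 else if x.2.pred % 4 = 2 then a y.2 else m y.2
  have hcode : Primrec fun x : (β × ℕ) × σ × σ × σ => x.1.2 := Primrec.snd.comp .fst
  have hparam : Primrec fun x : (β × ℕ) × σ × σ × σ => x.1.1 := Primrec.fst.comp .fst
  have hpred := Primrec.pred.comp hcode
  have hmod (r : ℕ) : PrimrecPred fun x : (β × ℕ) × σ × σ × σ => x.1.2.pred % 4 = r :=
    Primrec.eq.comp (Primrec.nat_mod.comp hpred (.const 4)) (.const r)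
  have hh : Primrec₂ h :=
    .ite (Primrec.eq.comp hcode (.const 0)) (hzero.comp hparam) <|
    .ite (hmod 0) (hvar.comp hparam (Primrec.nat_div.comp hpred (.const 4))) <|
    .ite (hmod 1) (hs.comp (Primrec.fst.comp .snd)) <|
    .ite (hmod 2) (ha.comp (Primrec.snd.comp .snd)) (hm.comp (Primrec.snd.comp .snd))
  refine primrec₂_of_child_rec (child := fun c => c.pred / 4) (by simpa [ofNat] using hzero)
    (Primrec.nat_div.comp Primrec.pred (.const 4)) (fun c => Nat.div_le_self _ _) hh fun b c => ?_
  match c with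
  | 0 => simp [h, ofNat]
  | c + 1 =>
    rw [ofNat]
    split_ifs <;> simp [h, *]

theorem primrec_rec {f : PreTerm → σ} {s : σ → σ} {a m : σ × σ → σ}
    (hvar : Primrec fun i => f (var i)) (hs : Primrec s) (ha : Primrec a) (hm : Primrec m)
    (hf_succ : ∀ t, f (succ t) = s (f t)) (hf_add : ∀ t u, f (add t u) = a (f t, f u))
    (hf_mul : ∀ t u, f (mul t u) = m (f t, f u)) : Primrec f :=
  (primrec₂_rec (f := fun (_ : Unit) => f) (.const _) (hvar.comp .snd) hs ha hm
    (fun _ => hf_succ) (fun _ => hf_add) fun _ => hf_mul).comp (.const ()) .id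

end PreTerm

namespace PreFormula

/-- The code of a formula; the last summand is the index of the head symbol. -/
def toNat : PreFormula → ℕ
  | falsum n => 5 * n + 0
  | equal n t u => 5 * Nat.pair n (Nat.pair (encode t) (encode u)) + 1
  | le n t u => 5 * Nat.pair n (Nat.pair (encode t) (encode u)) + 2
  | imp p q => 5 * Nat.pair p.toNat q.toNat + 3
  | all p => 5 * p.toNat + 4

/-- The arguments of the atomic formulas coded by `k`. -/
def atomArgs (k : ℕ) : ℕ × PreTerm × PreTerm := Denumerable.ofNat (ℕ × PreTerm × PreTerm) k

theorem atomArgs_pair (n : ℕ) (t u : PreTerm) :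
    atomArgs (Nat.pair n (Nat.pair (encode t) (encode u))) = (n, t, u) :=
  Denumerable.ofNat_encode (n, t, u)

theorem pair_atomArgs (k : ℕ) :
    Nat.pair (atomArgs k).1 (Nat.pair (encode (atomArgs k).2.1) (encode (atomArgs k).2.2)) = k :=
  Denumerable.encode_ofNat (α := ℕ × PreTerm × PreTerm) k

theorem primrec_atomArgs : Primrec atomArgs :=
  Primrec.ofNat _

/-- The formula with a given code. -/
def ofNat (c : ℕ) : PreFormula :=
  have := Nat.unpair_left_le (c / 5)
  have := Nat.unpair_right_le (c / 5)
  if c % 5 = 0 then falsum (c / 5)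
  else if c % 5 = 1 then
    equal (atomArgs (c / 5)).1 (atomArgs (c / 5)).2.1 (atomArgs (c / 5)).2.2
  else if c % 5 = 2 then
    le (atomArgs (c / 5)).1 (atomArgs (c / 5)).2.1 (atomArgs (c / 5)).2.2
  else if c % 5 = 3 then imp (ofNat (c / 5).unpair.1) (ofNat (c / 5).unpair.2)
  else all (ofNat (c / 5))
termination_by c
decreasing_by all_goals omega

theorem ofNat_toNat (p : PreFormula) : ofNat p.toNat = p := by
  induction p <;> rw [toNat, ofNat] <;>
    simp [atomArgs_pair, Nat.add_div_of_dvd_right, Nat.add_mod, *]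

theorem toNat_ofNat (c : ℕ) : (ofNat c).toNat = c := by
  induction c using Nat.strong_induction_on with
  | _ c ih =>
    have hl := Nat.unpair_left_le (c / 5)
    have hr := Nat.unpair_right_le (c / 5)
    rw [ofNat]
    split_ifs
    · rw [toNat]; omega
    · rw [toNat, pair_atomArgs]; omega
    · rw [toNat, pair_atomArgs]; omega
    · rw [toNat, ih _ (by omega), ih _ (by omega), Nat.pair_unpair]; omega
    · rw [toNat, ih _ (by omega)]; omega

instance : Denumerable PreFormula :=
  .mk' ⟨toNat, ofNat, ofNat_toNat, toNat_ofNat⟩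

theorem primrec_falsum : Primrec falsum :=
  Primrec.encode_iff.1 (Primrec.nat_mul.comp (.const 5) .id)

theorem primrec_equal : Primrec fun x : ℕ × PreTerm × PreTerm => equal x.1 x.2.1 x.2.2 :=
  Primrec.encode_iff.1 (Primrec.succ.comp (Primrec.nat_mul.comp (.const 5) .encode))

theorem primrec_le : Primrec fun x : ℕ × PreTerm × PreTerm => le x.1 x.2.1 x.2.2 :=
  Primrec.encode_iff.1 (Primrec.nat_add.comp (Primrec.nat_mul.comp (.const 5) .encode) (.const 2))

theorem primrec_imp : Primrec₂ imp :=
  Primrec.encode_iff.1 (Primrec.nat_add.comp (Primrec.nat_mul.comp (.const 5) .encode) (.const 3))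

theorem primrec_all : Primrec all :=
  Primrec.encode_iff.1 (Primrec.nat_add.comp (Primrec.nat_mul.comp (.const 5) .encode) (.const 4))

theorem primrec_rec {f : PreFormula → σ} {i : PreFormula × PreFormula → σ × σ → σ}
    {a : PreFormula → σ → σ} (hfalsum : Primrec fun n => f (falsum n))
    (hequal : Primrec fun x : ℕ × PreTerm × PreTerm => f (equal x.1 x.2.1 x.2.2))
    (hle : Primrec fun x : ℕ × PreTerm × PreTerm => f (le x.1 x.2.1 x.2.2))
    (hi : Primrec₂ i) (ha : Primrec₂ a) (hf_imp : ∀ p q, f (imp p q) = i (p, q) (f p, f q))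
    (hf_all : ∀ p, f (all p) = a p (f p)) : Primrec f := by
  rw [Primrec.ofNat_iff]
  let h (c : ℕ) (y : σ × σ × σ) : σ :=
    if c % 5 = 0 then f (falsum (c / 5))
    else if c % 5 = 1 then
      f (equal (atomArgs (c / 5)).1 (atomArgs (c / 5)).2.1 (atomArgs (c / 5)).2.2)
    else if c % 5 = 2 then
      f (le (atomArgs (c / 5)).1 (atomArgs (c / 5)).2.1 (atomArgs (c / 5)).2.2)
    else if c % 5 = 3 then i (ofNat (c / 5).unpair.1, ofNat (c / 5).unpair.2) y.2
    else a (ofNat (c / 5)) y.1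
  have hdiv : Primrec fun x : ℕ × σ × σ × σ => x.1 / 5 :=
    Primrec.nat_div.comp .fst (.const 5)
  have hmod (r : ℕ) : PrimrecPred fun x : ℕ × σ × σ × σ => x.1 % 5 = r :=
    Primrec.eq.comp (Primrec.nat_mod.comp .fst (.const 5)) (.const r)
  have hofNat : Primrec ofNat := Primrec.ofNat PreFormula
  have hunpair := Primrec.unpair.comp hdiv
  have hh : Primrec₂ h :=
    .ite (hmod 0) (hfalsum.comp hdiv) <|
    .ite (hmod 1) (hequal.comp (primrec_atomArgs.comp hdiv)) <|
    .ite (hmod 2) (hle.comp (primrec_atomArgs.comp hdiv)) <|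
    .ite (hmod 3) (hi.comp ((hofNat.comp (Primrec.fst.comp hunpair)).pair
      (hofNat.comp (Primrec.snd.comp hunpair))) (Primrec.snd.comp .snd))
      (ha.comp (hofNat.comp hdiv) (Primrec.fst.comp .snd))
  refine (primrec₂_of_child_rec (f := fun (_ : Unit) c => f (ofNat c)) (child := fun c => c / 5)
    (h := fun x => h x.2) (.const _) (Primrec.nat_div.comp .id (.const 5)) (fun c => by omega)
    (hh.comp (Primrec.snd.comp .fst) .snd) fun _ c => ?_).comp (.const ()) .id
  conv_lhs => rw [ofNat]
  split_ifs <;> simp [h, *]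

end PreFormula

end Codes

/-! ### Sentences as raw formulas -/

section RawSemantics

variable {M : Type*} [L.Structure M]

/-- The value of a raw term; variables beyond the length of the environment denote `0`. -/
def PreTerm.eval (env : List M) : PreTerm → M
  | zero => Structure.funMap (L := L) Func.zero ![]
  | var i => env.getD i (Structure.funMap (L := L) Func.zero ![])
  | succ t => Structure.funMap (L := L) Func.succ ![t.eval env]
  | add t u => Structure.funMap (L := L) Func.add ![t.eval env, u.eval env]
  | mul t u => Structure.funMap (L := L) Func.mul ![t.eval env, u.eval env]

/-- Truth of a raw formula in an environment. -/
def PreFormula.Holds : PreFormula → List M → Prop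
  | falsum _, _ => False
  | equal _ t u, env => t.eval env = u.eval env
  | le _ t u, env => Structure.RelMap (L := L) Rel.le ![t.eval env, u.eval env]
  | imp p q, env => p.Holds env → q.Holds env
  | all p, env => ∀ x : M, p.Holds (env ++ [x])

end RawSemantics

section Erasure

variable {n : ℕ}

/-- The raw term underlying a term, obtained by forgetting the context. -/
def termToPre : L.Term (Empty ⊕ Fin n) → PreTerm
  | .var v => Sum.elim Empty.elim (fun i : Fin n => .var i.1) v
  | .func f ts => match f with
    | Func.zero => .zero
    | Func.succ => .succ (termToPre (ts 0))
    | Func.add => .add (termToPre (ts 0)) (termToPre (ts 1))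
    | Func.mul => .mul (termToPre (ts 0)) (termToPre (ts 1))

/-- The raw formula underlying a formula. -/
def toPre : ∀ {n : ℕ}, L.BoundedFormula Empty n → PreFormula
  | n, .falsum => .falsum n
  | n, .equal t u => .equal n (termToPre t) (termToPre u)
  | n, .rel R ts => match R with
    | Rel.le => .le n (termToPre (ts 0)) (termToPre (ts 1))
  | _, .imp φ ψ => .imp (toPre φ) (toPre ψ)
  | _, .all φ => .all (toPre φ)

@[elab_as_elim]
theorem term_induction {P : L.Term (Empty ⊕ Fin n) → Prop}
    (var : ∀ i : Fin n, P (.var (Sum.inr i)))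
    (zero : ∀ ts, P (.func (Func.zero : L.Functions 0) ts))
    (succ : ∀ ts, P (ts 0) → P (.func (Func.succ : L.Functions 1) ts))
    (add : ∀ ts, P (ts 0) → P (ts 1) → P (.func (Func.add : L.Functions 2) ts))
    (mul : ∀ ts, P (ts 0) → P (ts 1) → P (.func (Func.mul : L.Functions 2) ts))
    (t : L.Term (Empty ⊕ Fin n)) : P t := by
  induction t with
  | var v =>
    rcases v with v | i
    · exact v.elim
    · exact var i
  | @func k f ts ih =>
    change Func k at f
    cases f
    · exact zero ts
    · exact succ ts (ih 0)
    · exact add ts (ih 0) (ih 1)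
    · exact mul ts (ih 0) (ih 1)

@[elab_as_elim]
theorem formula_induction {P : ∀ {n : ℕ}, L.BoundedFormula Empty n → Prop}
    (falsum : ∀ n, P (BoundedFormula.falsum : L.BoundedFormula Empty n))
    (equal : ∀ n (t u : L.Term (Empty ⊕ Fin n)), P (.equal t u))
    (le : ∀ n (ts : Fin 2 → L.Term (Empty ⊕ Fin n)), P (.rel (Rel.le : L.Relations 2) ts))
    (imp : ∀ n (φ ψ : L.BoundedFormula Empty n), P φ → P ψ → P (.imp φ ψ))
    (all : ∀ n (φ : L.BoundedFormula Empty (n + 1)), P φ → P (.all φ))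
    (φ : L.BoundedFormula Empty n) : P φ := by
  induction φ with
  | falsum => exact falsum _
  | equal t u => exact equal _ t u
  | @rel _ k R ts => change Rel k at R; cases R; exact le _ ts
  | imp _ _ ihφ ihψ => exact imp _ _ _ ihφ ihψ
  | all _ ih => exact all _ _ ih

variable {M : Type*} [L.Structure M] {v : Empty → M}

theorem eval_termToPre (xs : Fin n → M) (t : L.Term (Empty ⊕ Fin n)) :
    (termToPre t).eval (List.ofFn xs) = t.realize (Sum.elim v xs) := by
  induction t using term_induction with
  | var i => simp [termToPre, PreTerm.eval]
  | zero ts => exact congrArg (Structure.funMap (L := L) Func.zero) (Subsingleton.elim _ _)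
  | succ ts ih => exact congrArg _ (funext fun i => by fin_cases i; exact ih)
  | add ts ih₀ ih₁ | mul ts ih₀ ih₁ =>
    exact congrArg _ (funext fun i => by fin_cases i <;> [exact ih₀; exact ih₁])

theorem holds_toPre (φ : L.BoundedFormula Empty n) (xs : Fin n → M) :
    (toPre φ).Holds (List.ofFn xs) ↔ φ.Realize v xs := by
  induction φ using formula_induction with
  | falsum n => exact Iff.rfl
  | equal n t u => exact iff_of_eq (congrArg₂ _ (eval_termToPre xs t) (eval_termToPre xs u))
  | le n ts =>
    exact iff_of_eq (congrArg _ (funext fun i => by fin_cases i <;> exact eval_termToPre xs _))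
  | imp n φ ψ ihφ ihψ => exact imp_congr (ihφ xs) (ihψ xs)
  | all n φ ih =>
    refine forall_congr' fun x => ?_
    rw [← ih, List.ofFn_succ' (Fin.snoc xs x)]
    simp

theorem holds_toPre_nil (φ : Sent) : (toPre φ).Holds ([] : List M) ↔ M ⊨ φ := by
  rw [← List.ofFn_zero (f := (default : Fin 0 → M)), holds_toPre (v := default)]
  exact Iff.rfl

end Erasure

/-- A strict upper bound for the indices of the variables of a raw term. -/
def PreTerm.bound : PreTerm → ℕ
  | zero => 0
  | var i => i + 1
  | succ t => t.bound
  | add t u => max t.bound u.bound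
  | mul t u => max t.bound u.bound

/-- The number of free variables of a raw formula, or `none` if it is not well-formed. -/
def PreFormula.arity : PreFormula → Option ℕ
  | falsum n => some n
  | equal n t u => if max t.bound u.bound ≤ n then some n else none
  | le n t u => if max t.bound u.bound ≤ n then some n else none
  | imp p q => if p.arity = q.arity then p.arity else none
  | all p => p.arity.bind Nat.ppred

/-- The list of symbol codes that `FirstOrder.Language.Term.listEncode` attaches to a term. -/
def PreTerm.symbols : PreTerm → List ℕ
  | zero => [1]
  | var i => [2 * (2 * i + 1)]
  | succ t => 3 :: t.symbols
  | add t u => 5 :: (t.symbols ++ u.symbols)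
  | mul t u => 7 :: (t.symbols ++ u.symbols)

/-- The code that `FirstOrder.Language.BoundedFormula.listEncode` gives to a term `t` in a
context of `n` variables. -/
def termSymbol (n : ℕ) (t : PreTerm) : ℕ :=
  2 * Nat.pair n (Encodable.encode t.symbols)

/-- The list of symbol codes that `FirstOrder.Language.BoundedFormula.listEncode` attaches to a
formula. -/
def PreFormula.symbols : PreFormula → List ℕ
  | falsum n => [2 * (2 * (n + 2) + 1) + 1]
  | equal n t u => [termSymbol n t, termSymbol n u]
  | le n t u => [1, 2 * (2 * n + 1) + 1, termSymbol n t, termSymbol n u]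
  | imp p q => 3 :: (p.symbols ++ q.symbols)
  | all p => 7 :: p.symbols

section ErasureRange

variable {n : ℕ}

theorem bound_termToPre_le (t : L.Term (Empty ⊕ Fin n)) : (termToPre t).bound ≤ n := by
  induction t using term_induction with
  | var i => exact i.2
  | zero _ => exact n.zero_le
  | succ _ ih => exact ih
  | add _ ih₀ ih₁ | mul _ ih₀ ih₁ => exact max_le ih₀ ih₁

theorem exists_termToPre_eq {t : PreTerm} (ht : t.bound ≤ n) :
    ∃ t' : L.Term (Empty ⊕ Fin n), termToPre t' = t := by
  induction t with
  | zero => exact ⟨.func (Func.zero : L.Functions 0) ![], rfl⟩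
  | var i => exact ⟨.var (Sum.inr ⟨i, ht⟩), rfl⟩
  | succ t ih =>
    obtain ⟨t, rfl⟩ := ih ht
    exact ⟨.func (Func.succ : L.Functions 1) ![t], rfl⟩
  | add t u iht ihu =>
    obtain ⟨t, rfl⟩ := iht (le_of_max_le_left ht)
    obtain ⟨u, rfl⟩ := ihu (le_of_max_le_right ht)
    exact ⟨.func (Func.add : L.Functions 2) ![t, u], rfl⟩
  | mul t u iht ihu =>
    obtain ⟨t, rfl⟩ := iht (le_of_max_le_left ht)
    obtain ⟨u, rfl⟩ := ihu (le_of_max_le_right ht)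
    exact ⟨.func (Func.mul : L.Functions 2) ![t, u], rfl⟩

theorem arity_toPre (φ : L.BoundedFormula Empty n) : (toPre φ).arity = some n := by
  induction φ using formula_induction with
  | falsum n => rfl
  | equal n t u => exact if_pos (max_le (bound_termToPre_le t) (bound_termToPre_le u))
  | le n ts => exact if_pos (max_le (bound_termToPre_le (ts 0)) (bound_termToPre_le (ts 1)))
  | imp n φ ψ ihφ ihψ => rw [toPre, PreFormula.arity, ihφ, ihψ, if_pos rfl]
  | all n φ ih => rw [toPre, PreFormula.arity, ih]; rfl

theorem exists_toPre_eq {p : PreFormula} (hp : p.arity = some n) :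
    ∃ φ : L.BoundedFormula Empty n, toPre φ = p := by
  induction p generalizing n with
  | falsum m =>
    obtain rfl := Option.some.inj hp
    exact ⟨.falsum, rfl⟩
  | equal m t u =>
    obtain ⟨hb, hm⟩ := Option.ite_none_right_eq_some.1 hp
    obtain rfl := Option.some.inj hm
    obtain ⟨t, rfl⟩ := exists_termToPre_eq (le_of_max_le_left hb)
    obtain ⟨u, rfl⟩ := exists_termToPre_eq (le_of_max_le_right hb)
    exact ⟨.equal t u, rfl⟩
  | le m t u =>
    obtain ⟨hb, hm⟩ := Option.ite_none_right_eq_some.1 hp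
    obtain rfl := Option.some.inj hm
    obtain ⟨t, rfl⟩ := exists_termToPre_eq (le_of_max_le_left hb)
    obtain ⟨u, rfl⟩ := exists_termToPre_eq (le_of_max_le_right hb)
    exact ⟨.rel (Rel.le : L.Relations 2) ![t, u], rfl⟩
  | imp p q ihp ihq =>
    obtain ⟨heq, hp⟩ := Option.ite_none_right_eq_some.1 hp
    obtain ⟨φ, rfl⟩ := ihp hp
    obtain ⟨ψ, rfl⟩ := ihq (heq ▸ hp)
    exact ⟨φ.imp ψ, rfl⟩
  | all p ih =>
    obtain ⟨m, hm, hmn⟩ := Option.bind_eq_some_iff.1 hp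
    obtain rfl := Nat.ppred_eq_some.1 hmn
    obtain ⟨φ, rfl⟩ := ih hm
    exact ⟨φ.all, rfl⟩

theorem encode_map_encode {α : Type*} [Encodable α] (l : List α) :
    Encodable.encode (l.map Encodable.encode) = Encodable.encode l := by
  induction l with
  | nil => rfl
  | cons a l ih => simp [ih]

theorem symbols_termToPre (t : L.Term (Empty ⊕ Fin n)) :
    (termToPre t).symbols = t.listEncode.map Encodable.encode := by
  induction t using term_induction with
  | var i => rfl
  | zero ts => rfl
  | succ ts ih =>
    simp only [termToPre, PreTerm.symbols, ih, Term.listEncode, List.finRange_succ]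
    simp
    rfl
  | add ts ih₀ ih₁ | mul ts ih₀ ih₁ =>
    simp only [termToPre, PreTerm.symbols, ih₀, ih₁, Term.listEncode, List.finRange_succ]
    simp
    rfl

theorem termSymbol_termToPre (t : L.Term (Empty ⊕ Fin n)) :
    termSymbol n (termToPre t) = 2 * Nat.pair n (Encodable.encode t) := by
  rw [termSymbol, symbols_termToPre, encode_map_encode]
  rfl

theorem symbols_toPre (φ : L.BoundedFormula Empty n) :
    (toPre φ).symbols = φ.listEncode.map Encodable.encode := by
  induction φ using formula_induction with
  | falsum n => rfl
  | equal n t u =>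
    rw [toPre, PreFormula.symbols, termSymbol_termToPre, termSymbol_termToPre]
    rfl
  | le n ts =>
    simp only [toPre, PreFormula.symbols, termSymbol_termToPre, BoundedFormula.listEncode]
    simp [List.finRange_succ]
    rfl
  | imp n φ ψ ihφ ihψ =>
    simp [toPre, PreFormula.symbols, ihφ, ihψ, BoundedFormula.listEncode]
  | all n φ ih => simp [toPre, PreFormula.symbols, ih, BoundedFormula.listEncode]

theorem gnum_eq_encode_symbols (φ : Sent) : gnum φ = Encodable.encode (toPre φ).symbols := by
  rw [symbols_toPre, encode_map_encode, gnum]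

theorem listEncode_injective :
    Function.Injective (BoundedFormula.listEncode : L.BoundedFormula Empty n → _) := fun φ ψ h => by
  simpa using BoundedFormula.listEncode_sigma_injective (a₁ := ⟨n, φ⟩) (a₂ := ⟨n, ψ⟩) h

theorem toPre_injective : Function.Injective (toPre : L.BoundedFormula Empty n → PreFormula) :=
  fun φ ψ h => listEncode_injective <|
    List.map_injective_iff.2 Encodable.encode_injective (by rw [← symbols_toPre, h, symbols_toPre])

theorem gnum_injective : Function.Injective gnum :=
  Encodable.encode_injective.comp listEncode_injective

end ErasureRange

section SentenceCodes

open Primrec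

theorem PreTerm.primrec_bound : Primrec PreTerm.bound :=
  PreTerm.primrec_rec Primrec.succ .id nat_max nat_max (fun _ => rfl) (fun _ _ => rfl)
    fun _ _ => rfl

theorem PreTerm.primrec_symbols : Primrec PreTerm.symbols := by
  have cons_append (k : ℕ) : Primrec fun x : List ℕ × List ℕ => k :: (x.1 ++ x.2) :=
    list_cons.comp (.const k) list_append
  refine PreTerm.primrec_rec (s := fun l => 3 :: l) ?_ (list_cons.comp (.const 3) .id)
    (cons_append 5) (cons_append 7) (fun _ => rfl) (fun _ _ => rfl) fun _ _ => rfl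
  exact list_cons.comp (nat_mul.comp (.const 2) (nat_double_succ.comp .id)) (.const [])

theorem primrec_termSymbol : Primrec₂ termSymbol :=
  nat_mul.comp (.const 2)
    (Primrec₂.natPair.comp .fst (Primrec.encode.comp (PreTerm.primrec_symbols.comp .snd)))

theorem PreFormula.primrec_arity : Primrec PreFormula.arity := by
  have atom : Primrec fun x : ℕ × PreTerm × PreTerm =>
      if max x.2.1.bound x.2.2.bound ≤ x.1 then some x.1 else none :=
    .ite (nat_le.comp (nat_max.comp (PreTerm.primrec_bound.comp (fst.comp snd))
      (PreTerm.primrec_bound.comp (snd.comp snd))) fst) (option_some.comp fst) (.const none)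
  refine PreFormula.primrec_rec (i := fun _ x => if x.1 = x.2 then x.1 else none)
    (a := fun _ x => x.bind Nat.ppred) option_some atom atom ?_ ?_ (fun _ _ => rfl) fun _ => rfl
  · exact .ite (Primrec.eq.comp (fst.comp snd) (snd.comp snd)) (fst.comp snd) (.const none)
  · have hppred : Primrec Nat.ppred :=
      (nat_casesOn .id (.const none) (option_some.comp snd).to₂).of_eq fun n => by cases n <;> rfl
    exact option_bind snd (hppred.comp snd).to₂

theorem PreFormula.primrec_symbols : Primrec PreFormula.symbols := by
  have atom : Primrec fun x : ℕ × PreTerm × PreTerm =>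
      [termSymbol x.1 x.2.1, termSymbol x.1 x.2.2] :=
    list_cons.comp (primrec_termSymbol.comp fst (fst.comp snd))
      (list_cons.comp (primrec_termSymbol.comp fst (snd.comp snd)) (.const []))
  refine PreFormula.primrec_rec (i := fun _ x => 3 :: (x.1 ++ x.2)) (a := fun _ l => 7 :: l) ?_ atom
    ?_ ?_ ?_ (fun _ _ => rfl) fun _ => rfl
  · exact list_cons.comp (nat_double_succ.comp (nat_double_succ.comp
      (Primrec.succ.comp Primrec.succ))) (.const [])
  · exact list_cons.comp (.const 1)
      (list_cons.comp (nat_double_succ.comp (nat_double_succ.comp fst)) atom)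
  · exact list_cons.comp (.const 3) (list_append.comp (fst.comp snd) (snd.comp snd))
  · exact list_cons.comp (.const 7) snd

theorem primrecPred_arity_eq_zero : PrimrecPred fun p : PreFormula => p.arity = some 0 :=
  Primrec.eq.comp PreFormula.primrec_arity (.const _)

instance : Primcodable {p : PreFormula // p.arity = some 0} :=
  Primcodable.subtype primrecPred_arity_eq_zero

/-- Sentences correspond to the raw formulas without free variables. -/
noncomputable def sentEquiv : Sent ≃ {p : PreFormula // p.arity = some 0} :=
  Equiv.ofBijective (fun φ => ⟨toPre φ, arity_toPre φ⟩)
    ⟨fun _ _ h => toPre_injective (congrArg Subtype.val h),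
      fun p => (exists_toPre_eq p.2).imp fun _ h => Subtype.ext h⟩

noncomputable instance : Primcodable Sent :=
  Primcodable.ofEquiv _ sentEquiv

theorem primrec_toPre_iff {α : Type*} [Primcodable α] {f : α → Sent} :
    (Primrec fun a => toPre (f a)) ↔ Primrec f :=
  (subtype_val_iff (f := fun a => sentEquiv (f a))).trans (of_equiv_iff sentEquiv)

theorem primrec_toPre : Primrec (toPre : Sent → PreFormula) :=
  primrec_toPre_iff.2 .id

theorem primrec_gnum : Primrec gnum :=
  (Primrec.encode.comp (PreFormula.primrec_symbols.comp primrec_toPre)).of_eq fun φ =>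
    (gnum_eq_encode_symbols φ).symm

theorem primrec_imp : Primrec₂ fun φ ψ : Sent => (φ.imp ψ : Sent) :=
  primrec_toPre_iff.1
    (PreFormula.primrec_imp.comp (primrec_toPre.comp fst) (primrec_toPre.comp snd))

theorem primrec_not : Primrec fun φ : Sent => (∼φ : Sent) :=
  primrec_imp.comp .id (.const ⊥)

theorem primrec_inf : Primrec₂ fun φ ψ : Sent => φ ⊓ ψ :=
  primrec_not.comp (primrec_imp.comp fst (primrec_not.comp snd))

end SentenceCodes

/-! ### A decidable normal form for `Π₁` sentences -/

namespace PreFormula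

/-- Recognizes the guards `xₙ ≤ u` of bounded quantifiers, where `xₙ` is the last variable of the
context and does not occur in `u`. -/
def isGuard : PreFormula → Bool
  | le n t u => decide (t = .var (n - 1)) && decide (u.bound < n)
  | _ => false

/-- Recognizes the implications whose premise is a guard. -/
def isGuarded : PreFormula → Bool
  | imp p _ => p.isGuard
  | _ => false

/-- Recognizes formulas in which every quantifier is a bounded universal one; a bounded existential
quantifier has to be written as the negation of a bounded universal one. -/
def isBounded : PreFormula → Bool
  | imp p q => p.isBounded && q.isBounded
  | all p => p.isGuarded && p.isBounded
  | _ => true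

/-- Recognizes a block of universal quantifiers in front of a bounded formula. -/
def isPi : PreFormula → Bool
  | imp p q => p.isBounded && q.isBounded
  | all p => p.isPi
  | _ => true

theorem isPi_of_isBounded {p : PreFormula} (hp : p.isBounded = true) : p.isPi = true := by
  induction p with
  | falsum | equal | le => rfl
  | imp => exact hp
  | all p ih => exact ih (Bool.and_eq_true_iff.1 hp).2

open Primrec

theorem primrec_isGuard : Primrec isGuard := by
  refine primrec_rec (i := fun _ _ => false) (a := fun _ _ => false) (.const false)
    (.const false) ?_ (.const false) (.const false) (fun _ _ => rfl) fun _ => rfl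
  exact Primrec.and.comp
    (Primrec.eq.comp (fst.comp snd) (PreTerm.primrec_var.comp (pred.comp fst))).decide
    (nat_lt.comp (PreTerm.primrec_bound.comp (snd.comp snd)) fst).decide

theorem primrec_isGuarded : Primrec isGuarded :=
  primrec_rec (i := fun x _ => x.1.isGuard) (a := fun _ _ => false) (.const false)
    (.const false) (.const false) (primrec_isGuard.comp (fst.comp fst)) (.const false)
    (fun _ _ => rfl) fun _ => rfl

theorem primrec_isBounded : Primrec isBounded :=
  primrec_rec (i := fun _ x => x.1 && x.2) (a := fun p x => p.isGuarded && x) (.const true)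
    (.const true) (.const true) (Primrec.and.comp (fst.comp snd) (snd.comp snd))
    (Primrec.and.comp (primrec_isGuarded.comp fst) snd) (fun _ _ => rfl) fun _ => rfl

theorem primrec_isPi : Primrec isPi :=
  primrec_rec (i := fun x _ => x.1.isBounded && x.2.isBounded) (a := fun _ x => x) (.const true)
    (.const true) (.const true)
    (Primrec.and.comp (primrec_isBounded.comp (fst.comp fst))
      (primrec_isBounded.comp (snd.comp fst))) snd (fun _ _ => rfl) fun _ => rfl

end PreFormula

/-- The sentences consisting of a block of universal quantifiers in front of a matrix whose
quantifiers are bounded universal ones: a decidable set of `Π₁` sentences which contains every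
`Π₁` sentence up to logical equivalence. -/
def StrictPi1 (φ : Sent) : Prop := (toPre φ).isPi = true

theorem primrecPred_strictPi1 : PrimrecPred StrictPi1 :=
  Primrec.eq.comp (PreFormula.primrec_isPi.comp primrec_toPre) (.const true)

section Bounded

variable {n N : ℕ}

theorem termToPre_relabel (ρ : Fin n → Fin N) (hρ : ∀ i, (ρ i).1 = i.1)
    (t : L.Term (Empty ⊕ Fin n)) : termToPre (t.relabel (Sum.map id ρ)) = termToPre t := by
  induction t using term_induction with
  | var i => exact congrArg PreTerm.var (hρ i)
  | zero ts => rfl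
  | succ ts ih => exact congrArg PreTerm.succ ih
  | add ts ih₀ ih₁ => exact congrArg₂ PreTerm.add ih₀ ih₁
  | mul ts ih₀ ih₁ => exact congrArg₂ PreTerm.mul ih₀ ih₁

/-- The guard `xₙ ≤ t` of a bounded quantifier. -/
def guard (t : L.Term (Empty ⊕ Fin n)) : L.BoundedFormula Empty (n + 1) :=
  leF (Term.var (Sum.inr (Fin.last n))) (t.relabel (Sum.map id Fin.castSucc))

theorem toPre_guard (t : L.Term (Empty ⊕ Fin n)) :
    toPre (guard t) = .le (n + 1) (.var n) (termToPre t) :=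
  congrArg (PreFormula.le (n + 1) (.var n)) (termToPre_relabel Fin.castSucc (fun _ => rfl) t)

theorem isGuard_toPre_guard (t : L.Term (Empty ⊕ Fin n)) : (toPre (guard t)).isGuard = true := by
  simp [toPre_guard, PreFormula.isGuard, Nat.lt_succ_of_le (bound_termToPre_le t)]

theorem isBounded_toPre_all_guard_imp (t : L.Term (Empty ⊕ Fin n))
    {φ : L.BoundedFormula Empty (n + 1)} (hφ : (toPre φ).isBounded = true) :
    (toPre ((guard t).imp φ).all).isBounded = true := by
  change ((toPre (guard t)).isGuard && (true && (toPre φ).isBounded)) = true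
  rw [isGuard_toPre_guard, hφ]
  rfl

theorem exists_eq_guard_of_isGuard {φ : L.BoundedFormula Empty (n + 1)}
    (hφ : (toPre φ).isGuard = true) : ∃ t : L.Term (Empty ⊕ Fin n), φ = guard t := by
  have harity := arity_toPre φ
  generalize hp : toPre φ = p at hφ harity
  cases p with
  | le m t u =>
    obtain ⟨ht, hu⟩ := Bool.and_eq_true_iff.1 hφ
    obtain ⟨-, hm⟩ := Option.ite_none_right_eq_some.1 harity
    obtain rfl := Option.some.inj hm
    obtain ⟨u, rfl⟩ := exists_termToPre_eq (Nat.le_of_lt_succ (of_decide_eq_true hu))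
    obtain rfl := of_decide_eq_true ht
    exact ⟨u, toPre_injective (hp.trans (toPre_guard u).symm)⟩
  | _ => cases hφ

theorem isDelta0_of_isBounded {φ : L.BoundedFormula Empty n} (hφ : (toPre φ).isBounded = true) :
    IsDelta0 φ := by
  induction φ with
  | falsum => exact .falsum
  | equal t u => exact .equal t u
  | @rel n k R ts =>
    change Rel k at R
    cases R
    have hts : ts = ![ts 0, ts 1] := funext fun i => by fin_cases i <;> rfl
    rw [hts]
    exact .le (ts 0) (ts 1)
  | imp φ ψ ihφ ihψ =>
    obtain ⟨hφ, hψ⟩ := Bool.and_eq_true_iff.1 hφ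
    exact .imp (ihφ hφ) (ihψ hψ)
  | all φ ih =>
    obtain ⟨hguard, hbounded⟩ := Bool.and_eq_true_iff.1 hφ
    cases ih hbounded with
    | imp _ hψ =>
      obtain ⟨t, rfl⟩ := exists_eq_guard_of_isGuard hguard
      exact .ball t hψ
    | falsum | equal | le | ball | bex => cases hguard

theorem isPi1_of_strictPi1 {φ : Sent} (hφ : StrictPi1 φ) : IsPi1 φ := by
  suffices ∀ {n : ℕ} (φ : L.BoundedFormula Empty n), (toPre φ).isPi = true →
      ∃ (m : ℕ) (θ : L.BoundedFormula Empty m), IsDelta0 θ ∧ φ.alls = θ.alls from this φ hφ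
  intro n φ hφ
  induction φ using formula_induction with
  | all n φ ih => exact ih hφ
  | falsum n => exact ⟨n, _, isDelta0_of_isBounded rfl, rfl⟩
  | equal n t u => exact ⟨n, _, isDelta0_of_isBounded rfl, rfl⟩
  | le n ts => exact ⟨n, _, isDelta0_of_isBounded rfl, rfl⟩
  | imp n φ ψ => exact ⟨n, _, isDelta0_of_isBounded (φ := φ ⟹ ψ) hφ, rfl⟩

theorem strictPi1_alls {θ : L.BoundedFormula Empty n} (hθ : (toPre θ).isBounded = true) :
    StrictPi1 θ.alls := by
  suffices ∀ {n : ℕ} (φ : L.BoundedFormula Empty n), (toPre φ).isPi = true → StrictPi1 φ.alls from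
    this θ (PreFormula.isPi_of_isBounded hθ)
  intro n
  induction n with
  | zero => exact fun _ h => h
  | succ n ih => exact fun φ h => ih φ.all h

end Bounded

section StrictNormalForm

variable {n N : ℕ} {M : Type*}

theorem snoc_comp_snoc_castSucc (ρ : Fin n → Fin N) (xs : Fin N → M) (x : M) :
    (Fin.snoc xs x : Fin (N + 1) → M) ∘
      (Fin.snoc (Fin.castSucc ∘ ρ) (Fin.last N) : Fin (n + 1) → Fin (N + 1)) =
      Fin.snoc (xs ∘ ρ) x := by
  ext i
  refine Fin.lastCases ?_ (fun i => ?_) i <;> simp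

variable [L.Structure M] {v : Empty → M}

theorem realize_relabel_inr (ρ : Fin n → Fin N) (t : L.Term (Empty ⊕ Fin n)) (xs : Fin N → M) :
    (t.relabel (Sum.map id ρ)).realize (Sum.elim v xs) = t.realize (Sum.elim v (xs ∘ ρ)) := by
  rw [Term.realize_relabel, Sum.elim_comp_map, Function.comp_id]

theorem realize_leF (t u : L.Term (Empty ⊕ Fin n)) (xs : Fin n → M) :
    (leF t u).Realize v xs ↔ Structure.RelMap (L := L) Rel.le
      ![t.realize (Sum.elim v xs), u.realize (Sum.elim v xs)] :=
  BoundedFormula.realize_rel₂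

theorem realize_guard (t : L.Term (Empty ⊕ Fin n)) (xs : Fin n → M) (x : M) :
    (guard t).Realize v (Fin.snoc xs x) ↔
      Structure.RelMap (L := L) Rel.le ![x, t.realize (Sum.elim v xs)] := by
  rw [guard, realize_leF, realize_relabel_inr, Fin.snoc_comp_castSucc]
  simp

theorem realize_guard_relabel (ρ : Fin n → Fin N) (t : L.Term (Empty ⊕ Fin n)) (xs : Fin N → M)
    (x : M) : (guard (t.relabel (Sum.map id ρ))).Realize v (Fin.snoc xs x) ↔
      (guard t).Realize v (Fin.snoc (xs ∘ ρ) x) := by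
  rw [realize_guard, realize_guard, realize_relabel_inr]

theorem realize_alls_sent (θ : L.BoundedFormula Empty n) :
    M ⊨ (θ.alls : Sent) ↔ ∀ xs : Fin n → M, θ.Realize default xs := by
  rw [Sentence.Realize, BoundedFormula.realize_alls]

theorem IsDelta0.exists_isBounded_relabel {θ : L.BoundedFormula Empty n} (hθ : IsDelta0 θ)
    (ρ : Fin n → Fin N) :
    ∃ θ' : L.BoundedFormula Empty N, (toPre θ').isBounded = true ∧
      ∀ (M : Type) [L.Structure M] (v : Empty → M) (xs : Fin N → M),
        θ'.Realize v xs ↔ θ.Realize v (xs ∘ ρ) := by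
  induction hθ generalizing N with
  | falsum => exact ⟨.falsum, rfl, fun _ _ _ _ => Iff.rfl⟩
  | equal t u =>
    refine ⟨.equal (t.relabel (Sum.map id ρ)) (u.relabel (Sum.map id ρ)), rfl, fun M _ v xs => ?_⟩
    exact iff_of_eq (congrArg₂ _ (realize_relabel_inr ρ t xs) (realize_relabel_inr ρ u xs))
  | le t u =>
    refine ⟨leF (t.relabel (Sum.map id ρ)) (u.relabel (Sum.map id ρ)), rfl, fun M _ v xs => ?_⟩
    rw [realize_leF, realize_leF, realize_relabel_inr, realize_relabel_inr]
  | imp _ _ ihφ ihψ =>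
    obtain ⟨φ, hφ, realize_φ⟩ := ihφ ρ
    obtain ⟨ψ, hψ, realize_ψ⟩ := ihψ ρ
    exact ⟨φ.imp ψ, Bool.and_eq_true_iff.2 ⟨hφ, hψ⟩, fun M _ v xs =>
      imp_congr (realize_φ M v xs) (realize_ψ M v xs)⟩
  | ball t _ ih =>
    obtain ⟨φ, hφ, realize_φ⟩ := ih (Fin.snoc (Fin.castSucc ∘ ρ) (Fin.last N))
    refine ⟨((guard (t.relabel (Sum.map id ρ))).imp φ).all, isBounded_toPre_all_guard_imp _ hφ,
      fun M _ v xs => forall_congr' fun x => imp_congr (realize_guard_relabel ρ t xs x) ?_⟩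
    rw [realize_φ, snoc_comp_snoc_castSucc]
  | @bex n t ψ _ ih =>
    obtain ⟨φ, hφ, realize_φ⟩ := ih (Fin.snoc (Fin.castSucc ∘ ρ) (Fin.last N))
    refine ⟨∼((guard (t.relabel (Sum.map id ρ))).imp ∼φ).all, ?_, fun M _ v xs => ?_⟩
    · have hnot : (toPre ∼φ).isBounded = true := Bool.and_eq_true_iff.2 ⟨hφ, rfl⟩
      exact Bool.and_eq_true_iff.2 ⟨isBounded_toPre_all_guard_imp _ hnot, rfl⟩
    · change _ ↔ (guard t ⊓ ψ).ex.Realize v (xs ∘ ρ)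
      simp only [BoundedFormula.realize_not, BoundedFormula.realize_all, BoundedFormula.realize_imp,
        BoundedFormula.realize_ex, BoundedFormula.realize_inf, realize_guard_relabel, realize_φ,
        snoc_comp_snoc_castSucc, not_forall, not_not, exists_prop]

theorem exists_strictPi1_iff_and {φ ψ : Sent} (hφ : IsPi1 φ) (hψ : IsPi1 ψ) :
    ∃ χ : Sent, StrictPi1 χ ∧
      ∀ (M : Type) [L.Structure M] [Nonempty M], M ⊨ χ ↔ M ⊨ φ ∧ M ⊨ ψ := by
  obtain ⟨n, θ, hθ, rfl⟩ := hφ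
  obtain ⟨m, η, hη, rfl⟩ := hψ
  obtain ⟨θ', hθ', realize_θ'⟩ := hθ.exists_isBounded_relabel (Fin.castAdd m)
  obtain ⟨η', hη', realize_η'⟩ := hη.exists_isBounded_relabel (Fin.natAdd n)
  refine ⟨(θ' ⊓ η').alls, strictPi1_alls ?_, fun M _ ⟨x₀⟩ => ?_⟩
  · change (((toPre θ').isBounded && ((toPre η').isBounded && true)) && true) = true
    rw [hθ', hη']; rfl
  · simp only [realize_alls_sent, BoundedFormula.realize_inf, realize_θ', realize_η']
    refine ⟨fun h => ⟨fun xs => ?_, fun ys => ?_⟩, fun h xs => ⟨h.1 _, h.2 _⟩⟩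
    · have happend : Fin.append xs (fun _ => x₀) ∘ Fin.castAdd m = xs := funext fun i => by simp
      exact happend ▸ (h (Fin.append xs fun _ => x₀)).1
    · have happend : Fin.append (fun _ => x₀) ys ∘ Fin.natAdd n = ys := funext fun i => by simp
      exact happend ▸ (h (Fin.append (fun _ => x₀) ys)).2

theorem alls_injective :
    Function.Injective (BoundedFormula.alls : L.BoundedFormula Empty n → Sent) := by
  induction n with
  | zero => exact fun _ _ h => h
  | succ n ih => exact fun _ _ h => BoundedFormula.all.inj (ih h)

theorem exists_ne_strictPi1_iff {φ : Sent} (hφ : IsPi1 φ) :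
    ∃ χ : Sent, χ ≠ φ ∧ StrictPi1 χ ∧ ∀ (M : Type) [L.Structure M], M ⊨ χ ↔ M ⊨ φ := by
  obtain ⟨n, θ, hθ, rfl⟩ := hφ
  obtain ⟨θ', hθ', realize_θ'⟩ := hθ.exists_isBounded_relabel id
  by_cases hne : θ' = θ
  · subst hne
    refine ⟨((⊥ : L.BoundedFormula Empty n).not ⟹ θ').alls, fun h => ?_, strictPi1_alls ?_,
      fun M _ => ?_⟩
    · have := congrArg sizeOf (alls_injective h)
      simp at this
    · exact Bool.and_eq_true_iff.2 ⟨rfl, hθ'⟩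
    · simp [realize_alls_sent]
  · refine ⟨θ'.alls, fun h => hne (alls_injective h), strictPi1_alls hθ', fun M _ => ?_⟩
    simp only [realize_alls_sent, realize_θ', Function.comp_id]

end StrictNormalForm

/-! ### Effectively closed classes of valuations -/

/-- A propositional clause with atoms in `A`: the literal `(a, b)` says that `a` has truth value
`b`. -/
abbrev Clause (A : Type*) := List (A × Bool)

/-- Satisfaction of a clause by a valuation. -/
def Clause.Sat {A : Type*} (c : Clause A) (V : A → Bool) : Prop := ∃ l ∈ c, V l.1 = l.2

theorem Clause.isClosed_setOf_sat {A : Type*} (c : Clause A) : IsClosed {V | c.Sat V} := by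
  have : {V | c.Sat V} = ⋃ l ∈ {l | l ∈ c}, {V | V l.1 = l.2} := by
    ext V; simp [Clause.Sat]
  rw [this]
  exact (List.finite_toSet c).isClosed_biUnion fun l _ =>
    isClosed_eq (continuous_apply l.1) continuous_const

section Batches

variable {A : Type*} {e : ℕ → List (Clause A)} {K : ℕ} {c : Clause A}

/-- The clauses in the first `K` batches of an enumeration. -/
def firstBatches (e : ℕ → List (Clause A)) (K : ℕ) : List (Clause A) :=
  Nat.rec [] (fun k cs => cs ++ e k) K

theorem mem_firstBatches : c ∈ firstBatches e K ↔ ∃ k < K, c ∈ e k := by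
  induction K with
  | zero => simp [firstBatches]
  | succ K ih =>
    rw [Nat.exists_lt_succ_right, ← ih]
    exact List.mem_append

theorem forall_exists_batch_not_sat_iff :
    (∀ V : A → Bool, ∃ k, ∃ c ∈ e k, ¬ c.Sat V) ↔
      ∃ K, ∀ V : A → Bool, ∃ c ∈ firstBatches e K, ¬ c.Sat V := by
  refine ⟨fun h => ?_, fun ⟨K, hK⟩ V => ?_⟩
  · by_contra! hsat
    let solutions (K : ℕ) : Set (A → Bool) := {V | ∀ c ∈ firstBatches e K, c.Sat V}
    have antitone (K : ℕ) : solutions (K + 1) ⊆ solutions K := fun V hV c hc =>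
      hV c (List.mem_append_left _ hc)
    have closed (K : ℕ) : IsClosed (solutions K) := by
      simp only [solutions, Set.ofPred_forall]
      exact isClosed_biInter fun c _ => c.isClosed_setOf_sat
    obtain ⟨V, hV⟩ := IsCompact.nonempty_iInter_of_sequence_nonempty_isCompact_isClosed solutions
      antitone hsat (closed 0).isCompact closed
    obtain ⟨k, c, hc, hfail⟩ := h V
    exact hfail (Set.mem_iInter.1 hV (k + 1) c (mem_firstBatches.2 ⟨k, Nat.lt_succ_self k, hc⟩))
  · obtain ⟨c, hc, hfail⟩ := hK V
    obtain ⟨k, -, hck⟩ := mem_firstBatches.1 hc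
    exact ⟨k, c, hck, hfail⟩

end Batches

section EffectivelyClosed

open Encodable

variable {α ι A : Type*} [Primcodable α] [Primcodable ι] [Primcodable A]

/-- A uniformly effectively closed family of classes of valuations, i.e. a `Π⁰₁` class with a
parameter: the class at `a` is axiomatized by clauses that can be enumerated, in finite batches,
computably in `a`. -/
def EffectivelyClosed (P : α → (A → Bool) → Prop) : Prop :=
  ∃ e : α → ℕ → List (Clause A), Computable₂ e ∧ ∀ a V, P a V ↔ ∀ k, ∀ c ∈ e a k, c.Sat V

/-- `cs` is unsatisfiable already on the atoms with code below `m`, whose valuations are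
represented by the binary digits of the numbers below `2 ^ m`. -/
def RefutedBelow (m : ℕ) (cs : List (Clause A)) : Prop :=
  ∀ x < 2 ^ m, ∃ c ∈ cs, ∀ l ∈ c, encode l.1 < m ∧ x.testBit (encode l.1) ≠ l.2

theorem exists_refutedBelow_iff (cs : List (Clause A)) :
    (∃ m, RefutedBelow m cs) ↔ ∀ V : A → Bool, ∃ c ∈ cs, ¬ c.Sat V := by
  constructor
  · rintro ⟨m, hm⟩ V
    let digit (i : Fin m) : Bool := (decode (α := A) i.1).elim false V
    obtain ⟨c, hc, hfail⟩ := hm _ (Nat.ofBits_lt_two_pow digit)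
    refine ⟨c, hc, fun ⟨l, hl, hVl⟩ => ?_⟩
    obtain ⟨hlt, hne⟩ := hfail l hl
    rw [Nat.testBit_ofBits_lt digit _ hlt] at hne
    simp [digit, hVl] at hne
  · intro hcs
    obtain ⟨m, hm⟩ := ((List.finite_toSet cs.flatten).image fun l => encode l.1).bddAbove
    refine ⟨m + 1, fun x _ => ?_⟩
    obtain ⟨c, hc, hfail⟩ := hcs fun a => x.testBit (encode a)
    have hbound (l) (hl : l ∈ c) : encode l.1 ≤ m :=
      hm ⟨l, List.mem_flatten.2 ⟨c, hc, hl⟩, rfl⟩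
    exact ⟨c, hc, fun l hl => ⟨Nat.lt_succ_of_le (hbound l hl), fun h => hfail ⟨l, hl, h⟩⟩⟩

theorem primrec_two_pow : Primrec fun n : ℕ => 2 ^ n := by
  have hdouble : Primrec₂ fun _ y : ℕ => y * 2 := Primrec.nat_mul.comp .snd (.const 2)
  refine (Primrec.nat_rec₁ 1 hdouble).of_eq fun n => ?_
  induction n with
  | zero => rfl
  | succ n ih => rw [pow_succ, ← ih]

theorem primrec_testBit : Primrec₂ Nat.testBit := by
  have hdigit : Primrec fun x : ℕ × ℕ => x.1 / 2 ^ x.2 % 2 :=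
    Primrec.nat_mod.comp (Primrec.nat_div.comp .fst (primrec_two_pow.comp .snd)) (.const 2)
  refine ((PrimrecRel.decide Primrec.eq).comp hdigit (.const 1)).of_eq fun x => ?_
  rw [Nat.testBit_eq_decide_div_mod_eq]

theorem primrecRel_refutedBelow : PrimrecRel (RefutedBelow (A := A)) := by
  have hliteral : PrimrecRel fun (l : A × Bool) (y : ℕ × ℕ) =>
      encode l.1 < y.2 ∧ y.1.testBit (encode l.1) ≠ l.2 := by
    have hcode : Primrec fun x : (A × Bool) × ℕ × ℕ => encode x.1.1 :=
      Primrec.encode.comp (Primrec.fst.comp .fst)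
    exact (Primrec.nat_lt.comp hcode (Primrec.snd.comp .snd)).and
      (Primrec.eq.comp (primrec_testBit.comp (Primrec.fst.comp .snd) hcode)
        (Primrec.snd.comp .fst)).not
  have hclauses : PrimrecRel fun (x : ℕ) (y : ℕ × List (Clause A)) =>
      ∃ c ∈ y.2, ∀ l ∈ c, encode l.1 < y.1 ∧ x.testBit (encode l.1) ≠ l.2 :=
    hliteral.forall_mem_list.exists_mem_list.comp (Primrec.snd.comp .snd)
      (Primrec.fst.pair (Primrec.fst.comp .snd))
  exact (PrimrecRel.forall_mem_list hclauses).comp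
    (Primrec.list_range.comp (primrec_two_pow.comp .fst)) .id |>.of_eq fun x => by
      simp [RefutedBelow]

theorem computable₂_firstBatches {e : α → ℕ → List (Clause A)} (he : Computable₂ e) :
    Computable₂ fun a K => firstBatches (e a) K :=
  Computable.nat_rec (f := fun x : α × ℕ => x.2) (g := fun _ => [])
    (h := fun x y => y.2 ++ e x.1 y.1) .snd (.const [])
    (Computable.list_append.comp (Computable.snd.comp .snd)
      (he.comp (Computable.fst.comp .fst) (Computable.fst.comp .snd)))

namespace EffectivelyClosed

variable {P Q : α → (A → Bool) → Prop}

theorem limitDecidable_exists (hP : EffectivelyClosed P) :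
    LimitDecidable fun a => ∃ V, P a V := by
  classical
  obtain ⟨e, he, hPe⟩ := hP
  have hcertificate : Computable₂ fun (a : α) (x : ℕ × ℕ) =>
      decide (RefutedBelow x.1 (firstBatches (e a) x.2)) :=
    primrecRel_refutedBelow.decide.to_comp.comp (Computable.fst.comp .snd)
      ((computable₂_firstBatches he).comp .fst (Computable.snd.comp .snd))
  refine (LimitDecidable.exists_of_computable hcertificate).not.of_iff fun a => ?_
  rw [← not_iff_not, not_not]
  simp only [hPe, not_exists, not_forall, exists_prop, decide_eq_true_iff, Prod.exists]
  rw [forall_exists_batch_not_sat_iff, exists_comm]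
  simp only [exists_refutedBelow_iff]

theorem of_iff (hQ : EffectivelyClosed Q) (h : ∀ a V, P a V ↔ Q a V) : EffectivelyClosed P :=
  hQ.imp fun _ he => ⟨he.1, fun a V => (h a V).trans (he.2 a V)⟩

protected theorem and (hP : EffectivelyClosed P) (hQ : EffectivelyClosed Q) :
    EffectivelyClosed fun a V => P a V ∧ Q a V := by
  obtain ⟨e, he, hPe⟩ := hP
  obtain ⟨d, hd, hQd⟩ := hQ
  refine ⟨fun a k => e a k ++ d a k, Computable.list_append.comp he hd, fun a V => ?_⟩
  simp only [hPe, hQd, List.mem_append, or_imp, forall_and]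

theorem of_computable {e : α → ι → List (Clause A)} (he : Computable₂ e) :
    EffectivelyClosed fun a V => ∀ i, ∀ c ∈ e a i, c.Sat V := by
  refine ⟨fun a k => Option.casesOn (decode (α := ι) k) [] (e a),
    Computable.option_casesOn (Computable.decode.comp .snd) (.const [])
      (he.comp (Computable.fst.comp .fst) .snd).to₂, fun a V => ⟨fun h k => ?_, fun h i => ?_⟩⟩
  · dsimp only
    cases decode (α := ι) k with
    | none => simp
    | some i => exact h i
  · simpa only [encodek] using h (encode i)

theorem of_literals (ls : List ((ι → A) × Bool)) (hls : ∀ l ∈ ls, Primrec l.1) :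
    EffectivelyClosed fun (_ : α) V => ∀ i, ∃ l ∈ ls, V (l.1 i) = l.2 := by
  have hclause : Primrec fun i => ls.map fun l => (l.1 i, l.2) := by
    induction ls with
    | nil => exact .const []
    | cons l ls ih =>
      exact Primrec.list_cons.comp ((hls l List.mem_cons_self).pair (.const l.2))
        (ih fun l' hl' => hls l' (List.mem_cons_of_mem _ hl'))
  have hclauses : Primrec fun x : α × ι => [ls.map fun l => (l.1 x.2, l.2)] :=
    Primrec.list_cons.comp (hclause.comp .snd) (.const [])
  refine (of_computable hclauses.to_comp.to₂).of_iff fun _ V => forall_congr' fun i => ?_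
  simp [Clause.Sat]

theorem of_horn {y : ι → A} (xs : List (ι → A)) (hxs : xs.Forall Primrec) (hy : Primrec y) :
    EffectivelyClosed fun (_ : α) V => ∀ i, xs.Forall (fun x => V (x i)) → V (y i) := by
  rw [List.forall_iff_forall_mem] at hxs
  refine (of_literals ((y, true) :: xs.map fun x => (x, false))
    (by simpa [hy] using hxs)).of_iff fun _ V => forall_congr' fun i => ?_
  simp only [List.forall_iff_forall_mem, List.mem_cons, List.mem_map, exists_eq_or_imp,
    exists_exists_and_eq_and]
  by_cases h : V (y i) <;> simp [h]

theorem of_eq {x y : ι → A} (hx : Primrec x) (hy : Primrec y) :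
    EffectivelyClosed fun (_ : α) V => ∀ i, V (x i) = V (y i) := by
  refine ((of_literals [(x, true), (y, false)] (by simp [hx, hy])).and
    (of_literals [(x, false), (y, true)] (by simp [hx, hy]))).of_iff fun a V => ?_
  rw [← forall_and]
  refine forall_congr' fun i => ?_
  simp only [List.mem_cons, List.not_mem_nil, or_false, exists_eq_or_imp, exists_eq_left]
  cases V (x i) <;> cases V (y i) <;> simp

theorem of_imp_iff {x y z : ι → A} (hx : Primrec x) (hy : Primrec y) (hz : Primrec z) :
    EffectivelyClosed fun (_ : α) V => ∀ i, V (z i) ↔ (V (x i) → V (y i)) := by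
  refine ((of_horn [_, _] ⟨hz, hx⟩ hy).and ((of_horn [_] hy hz).and
    (of_literals [(x, true), (z, true)] (by simp [hx, hz])))).of_iff fun a V => ?_
  simp only [← forall_and, List.Forall]
  refine forall_congr' fun i => ?_
  simp only [List.mem_cons, List.not_mem_nil, or_false, exists_eq_or_imp, exists_eq_left]
  tauto

end EffectivelyClosed

end EffectivelyClosed

/-! ### Henkin valuations -/

section Henkin

open Encodable

namespace PreTerm

/-- Simultaneous substitution of the terms in `env` for the variables of a term. -/
def subst (env : List PreTerm) : PreTerm → PreTerm
  | zero => zero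
  | var i => env.getD i zero
  | succ t => succ (t.subst env)
  | add t u => add (t.subst env) (u.subst env)
  | mul t u => mul (t.subst env) (u.subst env)

theorem primrec₂_subst : Primrec₂ subst :=
  primrec₂_rec (.const zero) (Primrec.list_getD zero) primrec_succ primrec_add primrec_mul
    (fun _ _ => rfl) (fun _ _ _ => rfl) fun _ _ _ => rfl

end PreTerm

/-- The atoms of Henkin valuations: `(p, env)` stands for the instance of the formula `p` at the
closed terms `env`, where the variable symbols of these terms serve as Henkin constants. -/
abbrev Instance := PreFormula × List PreTerm

namespace Instance

/-- The instance `a = b`. -/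
def equal (a b : PreTerm) : Instance := (.equal 2 (.var 0) (.var 1), [a, b])

/-- The instance `a ≤ b`. -/
def le (a b : PreTerm) : Instance := (.le 2 (.var 0) (.var 1), [a, b])

/-- The Henkin constant for a counterexample to the universal closure of an instance. -/
def witness (x : Instance) : PreTerm := .var (encode x)

theorem primrec₂_equal : Primrec₂ equal :=
  (Primrec.const _).pair (Primrec.list_cons.comp .fst (Primrec.list_cons.comp .snd (.const [])))

theorem primrec₂_le : Primrec₂ le :=
  (Primrec.const _).pair (Primrec.list_cons.comp .fst (Primrec.list_cons.comp .snd (.const [])))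

end Instance

/-- The congruence laws for a truth assignment to the instances of the atomic formulas. -/
structure CongruenceValuation (V : Instance → Bool) : Prop where
  refl (a : PreTerm) : V (.equal a a)
  eucl (a b c : PreTerm) : V (.equal a b) → V (.equal a c) → V (.equal b c)
  succ (a b : PreTerm) : V (.equal a b) → V (.equal a.succ b.succ)
  add (a₁ a₂ b₁ b₂ : PreTerm) :
    V (.equal a₁ a₂) → V (.equal b₁ b₂) → V (.equal (a₁.add b₁) (a₂.add b₂))
  mul (a₁ a₂ b₁ b₂ : PreTerm) :
    V (.equal a₁ a₂) → V (.equal b₁ b₂) → V (.equal (a₁.mul b₁) (a₂.mul b₂))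
  le (a₁ a₂ b₁ b₂ : PreTerm) : V (.equal a₁ a₂) → V (.equal b₁ b₂) → V (.le a₁ b₁) → V (.le a₂ b₂)

/-- The truth assignments that describe a structure together with an interpretation of the Henkin
constants as witnesses. -/
structure HenkinValuation (V : Instance → Bool) : Prop extends CongruenceValuation V where
  falsum (n : ℕ) (env : List PreTerm) : V (.falsum n, env) = false
  equal_eq (n : ℕ) (t u : PreTerm) (env : List PreTerm) :
    V (.equal n t u, env) = V (.equal (t.subst env) (u.subst env))
  le_eq (n : ℕ) (t u : PreTerm) (env : List PreTerm) :
    V (.le n t u, env) = V (.le (t.subst env) (u.subst env))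
  imp_iff (p q : PreFormula) (env : List PreTerm) :
    V (p.imp q, env) ↔ (V (p, env) → V (q, env))
  all_spec (p : PreFormula) (env : List PreTerm) (a : PreTerm) :
    V (p.all, env) → V (p, env ++ [a])
  all_of_witness (p : PreFormula) (env : List PreTerm) :
    V (p, env ++ [Instance.witness (p, env)]) → V (p.all, env)

namespace HenkinValuation

variable {V : Instance → Bool} (hV : HenkinValuation V)

/-- Equality of closed terms according to a Henkin valuation. -/
def setoid : Setoid PreTerm where
  r a b := V (.equal a b)
  iseqv :=
    have symm {a b} (h : V (.equal a b)) : V (.equal b a) := hV.eucl a b a h (hV.refl a)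
    ⟨hV.refl, symm, fun {a b c} hab hbc => hV.eucl b a c (symm hab) hbc⟩

/-- The domain of the structure described by a Henkin valuation. -/
def Model : Type := Quotient hV.setoid

theorem le_congr (a b a' b' : PreTerm) (ha : hV.setoid a a') (hb : hV.setoid b b') :
    V (.le a b) = V (.le a' b') :=
  Bool.eq_iff_iff.2 ⟨hV.le _ _ _ _ ha hb, hV.le _ _ _ _ (hV.setoid.symm ha) (hV.setoid.symm hb)⟩

instance : L.Structure hV.Model where
  funMap f v :=
    match f with
    | .zero => Quotient.mk hV.setoid .zero
    | .succ => Quotient.map .succ (fun _ _ h => hV.succ _ _ h) (v 0)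
    | .add => Quotient.map₂ .add (fun _ _ ha _ _ hb => hV.add _ _ _ _ ha hb) (v 0) (v 1)
    | .mul => Quotient.map₂ .mul (fun _ _ ha _ _ hb => hV.mul _ _ _ _ ha hb) (v 0) (v 1)
  RelMap r v :=
    match r with
    | .le => Quotient.lift₂ (fun a b => V (.le a b)) hV.le_congr (v 0) (v 1) = true

/-- The element of the model named by a closed term. -/
def elem (a : PreTerm) : hV.Model := Quotient.mk hV.setoid a

theorem eval_map_elem (t : PreTerm) (env : List PreTerm) :
    t.eval (env.map hV.elem) = hV.elem (t.subst env) := by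
  induction t with
  | zero => rfl
  | var i => exact List.getD_map _ _ _
  | succ t ih => exact congrArg (fun x => Structure.funMap (L := L) Func.succ ![x]) ih
  | add t u iht ihu =>
    exact congrArg₂ (fun x y => Structure.funMap (L := L) Func.add ![x, y]) iht ihu
  | mul t u iht ihu =>
    exact congrArg₂ (fun x y => Structure.funMap (L := L) Func.mul ![x, y]) iht ihu

theorem holds_map_elem (p : PreFormula) (env : List PreTerm) :
    p.Holds (env.map hV.elem) ↔ V (p, env) := by
  induction p generalizing env with
  | falsum n => simp [PreFormula.Holds, hV.falsum]
  | equal n t u =>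
    rw [PreFormula.Holds, eval_map_elem, eval_map_elem, hV.equal_eq]
    exact Quotient.eq
  | le n t u =>
    rw [PreFormula.Holds, eval_map_elem, eval_map_elem, hV.le_eq]
    exact Iff.rfl
  | imp p q ihp ihq => rw [PreFormula.Holds, ihp, ihq, hV.imp_iff]
  | all p ih =>
    have holds_append (a : PreTerm) :
        p.Holds (env.map hV.elem ++ [hV.elem a]) ↔ V (p, env ++ [a]) := by
      rw [← ih, List.map_append, List.map_singleton]
    constructor
    · exact fun h => hV.all_of_witness p env ((holds_append _).1 (h _))
    · rintro h ⟨a⟩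
      exact (holds_append a).2 (hV.all_spec p env a h)

end HenkinValuation

theorem encode_lt_encode_of_mem {α : Type*} [Encodable α] {a : α} {l : List α} (h : a ∈ l) :
    encode a < encode l := by
  induction l with
  | nil => cases h
  | cons b l ih =>
    rw [encode_list_cons]
    rcases List.mem_cons.1 h with rfl | h
    · exact Nat.lt_succ_of_le (Nat.left_le_pair _ _)
    · exact Nat.lt_succ_of_lt ((ih h).trans_le (Nat.right_le_pair _ _))

section OfModel

variable (M : Type*) [L.Structure M]

theorem nonempty_of_structure : Nonempty M := ⟨Structure.funMap (L := L) Func.zero ![]⟩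

/-- The interpretation of closed terms with Henkin constants in a structure: the Henkin constant
for `(p, env)` denotes a counterexample to `∀ x, p` at `env`, if there is one. -/
noncomputable def interp : PreTerm → M
  | .zero => Structure.funMap (L := L) Func.zero ![]
  | .var i =>
    let x := Denumerable.ofNat Instance i
    have := nonempty_of_structure M
    Classical.epsilon fun y => ¬ x.1.Holds (x.2.attach.map (fun a => interp a.1) ++ [y])
  | .succ t => Structure.funMap (L := L) Func.succ ![interp t]
  | .add t u => Structure.funMap (L := L) Func.add ![interp t, interp u]
  | .mul t u => Structure.funMap (L := L) Func.mul ![interp t, interp u]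
termination_by t => t.toNat
decreasing_by
  · have hmem : a.1.toNat < encode (Denumerable.ofNat Instance i).2 := encode_lt_encode_of_mem a.2
    have hle := Nat.right_le_pair (encode (Denumerable.ofNat Instance i).1)
      (encode (Denumerable.ofNat Instance i).2)
    rw [← encode_prod_val, Denumerable.encode_ofNat] at hle
    simp only [PreTerm.toNat]
    omega
  all_goals
    simp only [PreTerm.toNat]
    grind [Nat.left_le_pair, Nat.right_le_pair]

theorem interp_subst (t : PreTerm) (env : List PreTerm) :
    interp M (t.subst env) = t.eval (env.map (interp M)) := by
  induction t with
  | zero => rw [PreTerm.subst, interp, PreTerm.eval]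
  | var i =>
    rw [PreTerm.subst, PreTerm.eval, ← List.getD_map _ _ (interp M), interp]
  | succ t ih => rw [PreTerm.subst, interp, PreTerm.eval, ih]
  | add t u iht ihu => rw [PreTerm.subst, interp, PreTerm.eval, iht, ihu]
  | mul t u iht ihu => rw [PreTerm.subst, interp, PreTerm.eval, iht, ihu]

theorem holds_of_holds_interp_witness (p : PreFormula) (env : List PreTerm)
    (h : p.Holds (env.map (interp M) ++ [interp M (Instance.witness (p, env))])) (y : M) :
    p.Holds (env.map (interp M) ++ [y]) := by
  contrapose! h
  rw [Instance.witness, interp]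
  simp only [Denumerable.ofNat_encode, List.attach_map_val]
  exact Classical.epsilon_spec (p := fun y => ¬ p.Holds (env.map (interp M) ++ [y])) ⟨y, h⟩

open Classical in
/-- The Henkin valuation that describes a structure. -/
noncomputable def valuation (x : Instance) : Bool := decide (x.1.Holds (x.2.map (interp M)))

theorem valuation_iff (p : PreFormula) (env : List PreTerm) :
    valuation M (p, env) ↔ p.Holds (env.map (interp M)) := by
  simp [valuation]

theorem valuation_equal_iff (a b : PreTerm) :
    valuation M (.equal a b) ↔ interp M a = interp M b := valuation_iff M _ _

theorem valuation_le_iff (a b : PreTerm) :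
    valuation M (.le a b) ↔ Structure.RelMap (L := L) Rel.le ![interp M a, interp M b] :=
  valuation_iff M _ _

theorem henkinValuation_valuation : HenkinValuation (valuation M) where
  refl a := (valuation_equal_iff M _ _).2 rfl
  eucl a b c := by simp only [valuation_equal_iff]; exact fun hb hc => hb.symm.trans hc
  succ a b := by simp only [valuation_equal_iff, interp]; exact fun h => by rw [h]
  add a a' b b' := by simp only [valuation_equal_iff, interp]; exact fun ha hb => by rw [ha, hb]
  mul a a' b b' := by simp only [valuation_equal_iff, interp]; exact fun ha hb => by rw [ha, hb]
  le a a' b b' := by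
    simp only [valuation_equal_iff, valuation_le_iff]; exact fun ha hb h => by rwa [← ha, ← hb]
  falsum n env := Bool.eq_false_iff.2 (valuation_iff M _ _).1
  equal_eq n t u env := by
    rw [Bool.eq_iff_iff, valuation_equal_iff, valuation_iff, interp_subst, interp_subst,
      PreFormula.Holds]
  le_eq n t u env := by
    rw [Bool.eq_iff_iff, valuation_le_iff, valuation_iff, interp_subst, interp_subst,
      PreFormula.Holds]
  imp_iff p q env := by simp only [valuation_iff, PreFormula.Holds]
  all_spec p env a := by
    simp only [valuation_iff, PreFormula.Holds, List.map_append, List.map_singleton]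
    exact fun h => h _
  all_of_witness p env := by
    simp only [valuation_iff, PreFormula.Holds, List.map_append, List.map_singleton]
    exact holds_of_holds_interp_witness M p env

end OfModel

theorem exists_model_iff_exists_henkinValuation (S : L.Theory) :
    (∃ (M : Type) (_ : L.Structure M), M ⊨ S) ↔
      ∃ V, HenkinValuation V ∧ ∀ ψ ∈ S, V (toPre ψ, []) := by
  constructor
  · rintro ⟨M, _, hM⟩
    exact ⟨valuation M, henkinValuation_valuation M, fun ψ hψ =>
      (valuation_iff M _ _).2 ((holds_toPre_nil ψ).2 (hM.realize_of_mem ψ hψ))⟩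
  · rintro ⟨V, hV, hS⟩
    exact ⟨hV.Model, inferInstance, ⟨fun ψ hψ =>
      (holds_toPre_nil ψ).1 ((hV.holds_map_elem (toPre ψ) []).2 (hS ψ hψ))⟩⟩

section Effective

variable {α : Type*} [Primcodable α]

theorem effectivelyClosed_congruenceValuation :
    EffectivelyClosed fun (_ : α) V => CongruenceValuation V := by
  have ha : Primrec fun x : PreTerm × PreTerm × PreTerm × PreTerm => x.1 := .fst
  have ha' : Primrec fun x : PreTerm × PreTerm × PreTerm × PreTerm => x.2.1 := .comp .fst .snd
  have hb : Primrec fun x : PreTerm × PreTerm × PreTerm × PreTerm => x.2.2.1 :=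
    .comp .fst (.comp .snd .snd)
  have hb' : Primrec fun x : PreTerm × PreTerm × PreTerm × PreTerm => x.2.2.2 :=
    .comp .snd (.comp .snd .snd)
  have heq {ι : Type} [Primcodable ι] {s t : ι → PreTerm} (hs : Primrec s) (ht : Primrec t) :
      Primrec fun i => Instance.equal (s i) (t i) := Instance.primrec₂_equal.comp hs ht
  have hle {ι : Type} [Primcodable ι] {s t : ι → PreTerm} (hs : Primrec s) (ht : Primrec t) :
      Primrec fun i => Instance.le (s i) (t i) := Instance.primrec₂_le.comp hs ht
  have refl := EffectivelyClosed.of_horn (α := α) [] trivial (heq .id .id)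
  have eucl := EffectivelyClosed.of_horn (α := α) [_, _] ⟨heq ha ha', heq ha hb⟩ (heq ha' hb)
  have succ := EffectivelyClosed.of_horn (α := α) [_] (heq ha ha')
    (heq (PreTerm.primrec_succ.comp ha) (PreTerm.primrec_succ.comp ha'))
  have add := EffectivelyClosed.of_horn (α := α) [_, _] ⟨heq ha ha', heq hb hb'⟩
    (heq (PreTerm.primrec_add.comp ha hb) (PreTerm.primrec_add.comp ha' hb'))
  have mul := EffectivelyClosed.of_horn (α := α) [_, _] ⟨heq ha ha', heq hb hb'⟩
    (heq (PreTerm.primrec_mul.comp ha hb) (PreTerm.primrec_mul.comp ha' hb'))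
  have le := EffectivelyClosed.of_horn (α := α) [_, _, _] ⟨heq ha ha', heq hb hb', hle ha hb⟩
    (hle ha' hb')
  refine (refl.and (eucl.and (succ.and (add.and (mul.and le))))).of_iff fun a V => ?_
  simp only [List.Forall, and_imp, forall_const, Prod.forall]
  exact ⟨fun h => ⟨h.refl, h.eucl, h.succ, h.add, h.mul, h.le⟩,
    fun ⟨refl, eucl, succ, add, mul, le⟩ => ⟨refl, eucl, succ, add, mul, le⟩⟩

theorem effectivelyClosed_henkinValuation :
    EffectivelyClosed fun (_ : α) V => HenkinValuation V := by
  have hsubst₁ : Primrec fun x : (ℕ × PreTerm × PreTerm) × List PreTerm => x.1.2.1.subst x.2 :=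
    PreTerm.primrec₂_subst.comp .snd (.comp .fst (.comp .snd .fst))
  have hsubst₂ : Primrec fun x : (ℕ × PreTerm × PreTerm) × List PreTerm => x.1.2.2.subst x.2 :=
    PreTerm.primrec₂_subst.comp .snd (.comp .snd (.comp .snd .fst))
  have happend : Primrec₂ fun (x : Instance) a => (x.1, x.2 ++ [a]) :=
    Primrec.pair (.comp .fst .fst)
      (Primrec.list_append.comp (.comp .snd .fst) (Primrec.list_cons.comp .snd (.const [])))
  have falsum := EffectivelyClosed.of_literals (α := α)
    [(fun x : ℕ × List PreTerm => (PreFormula.falsum x.1, x.2), false)]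
    (by simpa using .pair (PreFormula.primrec_falsum.comp .fst) .snd)
  have equal_eq := EffectivelyClosed.of_eq (α := α)
    (.pair (PreFormula.primrec_equal.comp .fst) .snd) (Instance.primrec₂_equal.comp hsubst₁ hsubst₂)
  have le_eq := EffectivelyClosed.of_eq (α := α)
    (.pair (PreFormula.primrec_le.comp .fst) .snd) (Instance.primrec₂_le.comp hsubst₁ hsubst₂)
  have imp_iff := EffectivelyClosed.of_imp_iff (α := α)
    (ι := (PreFormula × PreFormula) × List PreTerm) (.pair (.comp .fst .fst) .snd)
    (.pair (.comp .snd .fst) .snd)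
    (.pair (PreFormula.primrec_imp.comp (.comp .fst .fst) (.comp .snd .fst)) .snd)
  have all_spec := EffectivelyClosed.of_horn (α := α) (ι := Instance × PreTerm) [_]
    (.pair (PreFormula.primrec_all.comp (.comp .fst .fst)) (.comp .snd .fst))
    (happend.comp .fst .snd)
  have all_of_witness := EffectivelyClosed.of_horn (α := α) [_]
    (happend.comp .id (PreTerm.primrec_var.comp .encode))
    (.pair (PreFormula.primrec_all.comp .fst) .snd)
  refine (effectivelyClosed_congruenceValuation.and <| falsum.and <| equal_eq.and <| le_eq.and <|
    imp_iff.and <| all_spec.and all_of_witness).of_iff fun a V => ?_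
  simp only [List.Forall, List.mem_singleton, exists_eq_left, Prod.forall]
  exact ⟨fun h => ⟨h.1, h.falsum, h.equal_eq, h.le_eq, h.imp_iff, h.all_spec, h.all_of_witness⟩,
    fun ⟨congr, falsum, equal_eq, le_eq, imp_iff, all_spec, all_of_witness⟩ =>
      ⟨congr, falsum, equal_eq, le_eq, imp_iff, all_spec, all_of_witness⟩⟩

/-- The clause stating that a sentence is true. -/
def assertion (φ : Sent) : Clause Instance := [((toPre φ, []), true)]

theorem primrec_assertion : Primrec assertion :=
  Primrec.list_cons.comp (.pair (.pair primrec_toPre (.const [])) (.const true)) (.const [])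

theorem assertion_sat {φ : Sent} {V : Instance → Bool} :
    (assertion φ).Sat V ↔ V (toPre φ, []) := by
  simp [assertion, Clause.Sat]

theorem effectivelyClosed_sentence :
    EffectivelyClosed fun (φ : Sent) (V : Instance → Bool) => V (toPre φ, []) := by
  have hclauses : Primrec₂ fun (φ : Sent) (_ : Unit) => [assertion φ] :=
    Primrec.list_cons.comp (primrec_assertion.comp .fst) (.const [])
  exact (EffectivelyClosed.of_computable hclauses.to_comp).of_iff fun φ V => by
    simp [assertion_sat]

theorem RecursivelyAxiomatized.effectivelyClosed {T : L.Theory} (hT : RecursivelyAxiomatized T) :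
    EffectivelyClosed fun (_ : α) (V : Instance → Bool) => ∀ ψ ∈ T, V (toPre ψ, []) := by
  obtain ⟨f, hf, hfT⟩ := hT
  have hclauses : Computable₂ fun (_ : α) (ψ : Sent) => bif f (gnum ψ) then [assertion ψ] else [] :=
    .cond (hf.comp (primrec_gnum.to_comp.comp .snd))
      (Computable.list_cons.comp (primrec_assertion.to_comp.comp .snd) (.const [])) (.const [])
  refine (EffectivelyClosed.of_computable hclauses).of_iff fun _ V => forall_congr' fun ψ => ?_
  rw [hfT]
  cases f (gnum ψ) <;> simp [assertion_sat]

end Effective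

end Henkin

/-! ### Provability -/

section Provability

variable {T : L.Theory} {φ ψ : Sent}

theorem prov_iff : Prov T φ ↔ ∀ (M : Type) [L.Structure M], M ⊨ T → M ⊨ φ := by
  rw [Prov, Theory.models_sentence_iff]
  refine ⟨fun h M _ hM => ?_, fun h M => h M inferInstance⟩
  have := nonempty_of_structure M
  exact h (Theory.ModelType.of T M)

theorem implies_iff :
    Implies T φ ψ ↔ ∀ (M : Type) [L.Structure M], M ⊨ T → M ⊨ φ → M ⊨ ψ := by
  simp only [Implies, prov_iff, Theory.model_union_iff, Theory.model_singleton_iff, and_imp]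

theorem prov_imp_iff : Prov T (φ ⟹ ψ) ↔ Implies T φ ψ := by
  simp only [prov_iff, implies_iff, Sentence.realize_imp]

theorem equivMod_iff :
    EquivMod T φ ψ ↔ ∀ (M : Type) [L.Structure M], M ⊨ T → (M ⊨ φ ↔ M ⊨ ψ) := by
  simp only [EquivMod, prov_iff, Sentence.realize_iff]

theorem equivMod_iff_implies : EquivMod T φ ψ ↔ Implies T φ ψ ∧ Implies T ψ φ := by
  simp only [equivMod_iff, implies_iff, iff_iff_implies_and_implies, forall_and]

theorem consistentWith_iff :
    ConsistentWith T φ ↔ ∃ (M : Type) (_ : L.Structure M), M ⊨ T ∧ M ⊨ φ := by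
  simp [ConsistentWith, implies_iff, Sentence.Realize, Formula.realize_bot]

theorem not_implies_iff_consistentWith_inf_not :
    ¬ Implies T φ ψ ↔ ConsistentWith T (φ ⊓ ∼ψ) := by
  simp [consistentWith_iff, implies_iff, Sentence.realize_inf,
    Sentence.realize_not]

theorem limitDecidable_consistentWith (hT : RecursivelyAxiomatized T) :
    LimitDecidable (ConsistentWith T) := by
  have hclosed := effectivelyClosed_henkinValuation.and
    (effectivelyClosed_sentence.and (RecursivelyAxiomatized.effectivelyClosed hT))
  refine hclosed.limitDecidable_exists.of_iff fun φ => ?_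
  have hmodel := exists_model_iff_exists_henkinValuation (insert φ T)
  simp only [Theory.model_insert_iff, Set.forall_mem_insert] at hmodel
  simp only [← hmodel, consistentWith_iff, and_comm]

theorem limitDecidable_implies (hT : RecursivelyAxiomatized T) :
    LimitDecidable fun x : Sent × Sent => Implies T x.1 x.2 := by
  refine ((limitDecidable_consistentWith hT).comp (.of_primrec
    (primrec_inf.comp .fst (primrec_not.comp .snd)))).not.of_iff fun x => ?_
  rw [← not_implies_iff_consistentWith_inf_not, not_not]

theorem limitDecidable_equivMod (hT : RecursivelyAxiomatized T) :
    LimitDecidable fun x : Sent × Sent => EquivMod T x.1 x.2 :=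
  ((limitDecidable_implies hT).and
    ((limitDecidable_implies hT).comp (.of_primrec (.pair .snd .fst)))).of_iff
    fun _ => equivMod_iff_implies

end Provability

/-! ### Diagonalization against computable functions -/

section Diagonalization

open Encodable Nat.Partrec

variable {α β : Type*} [Primcodable α] [Primcodable β]

theorem exists_limitComputable_diagonal {h h' : α → β} (hh : LimitComputable h)
    (hh' : LimitComputable h') (hne : ∀ a, h' a ≠ h a) {s : ℕ → α} (hs : Primrec s)
    (s_inj : s.Injective) {x : α → ℕ} (hx : Primrec x) {y : β → ℕ} (hy : Primrec y)
    (y_inj : y.Injective) :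
    ∃ g : α → β, LimitComputable g ∧ (∀ a, g a = h a ∨ g a = h' a) ∧
      ¬ ∃ f : ℕ → ℕ, Computable f ∧ ∀ a, f (x a) = y (g a) := by
  classical
  let Computes (a : α) (b : β) : Prop := ∃ c : Code, s (encode c) = a ∧ y b ∈ c.eval (x a)
  have hComputes : LimitDecidable fun z : α × β => Computes z.1 z.2 := by
    have hstep : PrimrecRel fun (z : α × β) (w : Code × ℕ) =>
        s (encode w.1) = z.1 ∧ Code.evaln w.2 w.1 (x z.1) = some (y z.2) :=
      (Primrec.eq.comp (hs.comp (Primrec.encode.comp (.comp .fst .snd))) (.comp .fst .fst)).and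
        (Primrec.eq.comp
          (Code.primrec_evaln.comp (.pair (.pair (.comp .snd .snd) (.comp .fst .snd))
            (hx.comp (.comp .fst .fst))))
          (Primrec.option_some.comp (hy.comp (.comp .snd .fst))))
    refine (LimitDecidable.exists_of_computable hstep.decide.to_comp).of_iff fun z => ?_
    simp only [Computes, Code.evaln_complete, Prod.exists, decide_eq_true_iff, ← exists_and_left,
      Option.mem_def]
  refine ⟨fun a => if Computes a (h a) then h' a else h a,
    .ite (hComputes.comp (.pair (.of_primrec .id) hh)) hh' hh, fun a => ?_, ?_⟩
  · exact (ite_eq_or_eq _ _ _).symm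
  · rintro ⟨f, hf, hfg⟩
    obtain ⟨c, hc⟩ := Code.exists_code.1 (Partrec.nat_iff.1 hf)
    have eval_c (n : ℕ) : c.eval n = Part.some (f n) := congrFun hc n
    have hfa := hfg (s (encode c))
    dsimp only at hfa
    split_ifs at hfa with hcomp
    · obtain ⟨c', hc', hmem⟩ := hcomp
      rw [encode_injective (s_inj hc'), eval_c, hfa, Part.mem_some_iff] at hmem
      exact hne _ (y_inj hmem).symm
    · exact hcomp ⟨c, rfl, by rw [eval_c, hfa, Part.mem_some_iff]⟩

/-- Iterated implications from falsum, an effective injective sequence of sentences. -/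
def impTower (n : ℕ) : Sent := Nat.rec ⊥ (fun _ φ => (⊥ : Sent).imp φ) n

theorem primrec_impTower : Primrec impTower :=
  Primrec.nat_rec₁ ⊥ (primrec_imp.comp (.const ⊥) .snd)

theorem impTower_injective : impTower.Injective := by
  intro m
  induction m with
  | zero => rintro (_ | n) h <;> [rfl; cases h]
  | succ m ih =>
    rintro (_ | n) h
    · cases h
    · exact congrArg _ (ih (BoundedFormula.imp.inj h).2)

theorem exists_equivMod_not_recursiveFn {T : L.Theory} (hT : RecursivelyAxiomatized T)
    {h : Sent → Sent} (hh : LimitComputable h) (h_pi : ∀ φ, StrictPi1 (h φ)) :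
    ∃ g : Sent → Sent, LimitComputable g ∧ ¬ RecursiveFn g ∧ (∀ φ, IsPi1 (g φ)) ∧
      ∀ φ, EquivMod T (g φ) (h φ) := by
  have hhfst : LimitComputable fun x : Sent × Sent => h x.1 := hh.comp (.of_primrec .fst)
  have hsnd : LimitComputable fun x : Sent × Sent => x.2 := .of_primrec .snd
  obtain ⟨h', hh', h'_spec⟩ := LimitDecidable.exists_choice
    (r := fun φ χ => χ ≠ h φ ∧ StrictPi1 χ ∧ EquivMod T χ (h φ))
    (((LimitDecidable.of_primrecPred Primrec.eq).comp (hsnd.pair hhfst)).not.and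
      (((LimitDecidable.of_primrecPred primrecPred_strictPi1).comp hsnd).and
        ((limitDecidable_equivMod hT).comp (hsnd.pair hhfst)))) fun φ =>
      (exists_ne_strictPi1_iff (isPi1_of_strictPi1 (h_pi φ))).imp fun χ hχ =>
        ⟨hχ.1, hχ.2.1, equivMod_iff.2 fun M _ _ => hχ.2.2 M⟩
  obtain ⟨g, hg, g_eq, g_nonrec⟩ := exists_limitComputable_diagonal hh hh'
    (fun φ => (h'_spec φ).1) primrec_impTower impTower_injective primrec_gnum primrec_gnum
    gnum_injective
  refine ⟨g, hg, g_nonrec, fun φ => ?_, fun φ => ?_⟩ <;> rcases g_eq φ with hφ | hφ <;> rw [hφ]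
  · exact isPi1_of_strictPi1 (h_pi φ)
  · exact isPi1_of_strictPi1 (h'_spec φ).2.1
  · exact equivMod_iff.2 fun M _ _ => Iff.rfl
  · exact (h'_spec φ).2.2

end Diagonalization

/-! ### Chains of true `Π₁` sentences -/

section Chain

variable {T ea : L.Theory} {φ ψ : Sent} {con : Sent → Sent}

theorem Implies.trans {χ : Sent} (h : Implies T φ ψ) (h' : Implies T ψ χ) : Implies T φ χ :=
  implies_iff.2 fun M _ hM hφ => implies_iff.1 h' M hM (implies_iff.1 h M hM hφ)

theorem implies_refl : Implies T φ φ :=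
  implies_iff.2 fun _ _ _ => id

theorem implies_inf_left : Implies T (φ ⊓ ψ) φ :=
  implies_iff.2 fun _ _ _ h => ((Sentence.realize_inf _).1 h).1

theorem implies_inf_right : Implies T (φ ⊓ ψ) ψ :=
  implies_iff.2 fun _ _ _ h => ((Sentence.realize_inf _).1 h).2

theorem Implies.inf {χ : Sent} (h : Implies T φ ψ) (h' : Implies T φ χ) : Implies T φ (ψ ⊓ χ) :=
  implies_iff.2 fun M _ hM hφ =>
    (Sentence.realize_inf _).2 ⟨implies_iff.1 h M hM hφ, implies_iff.1 h' M hM hφ⟩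

theorem ConsistentWith.of_implies (hφ : ConsistentWith T φ) (h : Implies T φ ψ) :
    ConsistentWith T ψ :=
  fun hψ => hφ (h.trans hψ)

theorem Sound.trueInN_of_implies (hT : Sound T) (h : Implies T φ ψ) (hφ : TrueInN φ) :
    TrueInN ψ :=
  implies_iff.1 h ℕ ⟨hT⟩ hφ

theorem Sound.consistentWith (hT : Sound T) (hφ : TrueInN φ) : ConsistentWith T φ :=
  fun h => hT.trueInN_of_implies h hφ

theorem realize_exs_not_iff {M : Type*} [L.Structure M] {n : ℕ} (θ : L.BoundedFormula Empty n) :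
    M ⊨ (∼θ).exs ↔ ¬ M ⊨ θ.alls := by
  rw [realize_alls_sent, Sentence.Realize, BoundedFormula.realize_exs, not_forall]
  exact exists_congr fun xs => BoundedFormula.realize_not

theorem IsPi1.trueInN_of_consistentWith (hea : IsEA ea) (hext : ea ⊆ T) (hφ : IsPi1 φ)
    (hcons : ConsistentWith T φ) : TrueInN φ := by
  obtain ⟨n, θ, hθ, rfl⟩ := hφ
  by_contra hfalse
  have hprov : Prov ea (∼θ).exs :=
    hea.sigma1_complete _ ⟨n, _, hθ.imp .falsum, rfl⟩ ((realize_exs_not_iff θ).2 hfalse)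
  obtain ⟨M, _, hM, hMθ⟩ := consistentWith_iff.1 hcons
  exact (realize_exs_not_iff θ).1 (prov_iff.1 hprov M (hM.mono hext)) hMθ

theorem IsConOperator.implies_of_implies (hcon : IsConOperator T con) (h : Implies T φ ψ) :
    Implies T (con φ) (con ψ) :=
  prov_imp_iff.1 (hcon.prov_mono φ ψ h)

theorem IsConOperator.exists_strictPi1_not_implies (hcon : IsConOperator T con)
    (hφ : ConsistentWith T φ) : ∃ π, StrictPi1 π ∧ TrueInN π ∧ ¬ Implies T φ π := by
  obtain ⟨π, -, π_strict, π_iff⟩ := exists_ne_strictPi1_iff (hcon.pi1 φ)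
  refine ⟨π, π_strict, (π_iff ℕ).2 ((hcon.true_iff φ).2 hφ), fun h => hcon.goedel2 φ hφ ?_⟩
  exact h.trans (implies_iff.2 fun M _ _ => (π_iff M).1)

theorem exists_limitComputable_strictPi1_inf (hT : RecursivelyAxiomatized T) :
    ∃ conj : Sent × Sent → Sent, LimitComputable conj ∧ ∀ φ ψ, StrictPi1 φ → StrictPi1 ψ →
      StrictPi1 (conj (φ, ψ)) ∧ EquivMod T (conj (φ, ψ)) (φ ⊓ ψ) := by
  have hstrict := LimitDecidable.of_primrecPred primrecPred_strictPi1
  have hequiv : LimitDecidable fun x : (Sent × Sent) × Sent => EquivMod T x.2 (x.1.1 ⊓ x.1.2) :=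
    (limitDecidable_equivMod hT).comp (.of_primrec
      (.pair .snd (primrec_inf.comp (.comp .fst .fst) (.comp .snd .fst))))
  obtain ⟨conj, hconj, conj_spec⟩ := LimitDecidable.exists_choice
    (r := fun (x : Sent × Sent) χ => StrictPi1 x.1 ∧ StrictPi1 x.2 →
      StrictPi1 χ ∧ EquivMod T χ (x.1 ⊓ x.2))
    (((hstrict.comp (.of_primrec (.comp .fst .fst))).and
      (hstrict.comp (.of_primrec (.comp .snd .fst)))).imp
        ((hstrict.comp (.of_primrec .snd)).and hequiv)) fun x => by
      by_cases hx : StrictPi1 x.1 ∧ StrictPi1 x.2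
      · obtain ⟨χ, χ_strict, χ_iff⟩ :=
          exists_strictPi1_iff_and (isPi1_of_strictPi1 hx.1) (isPi1_of_strictPi1 hx.2)
        refine ⟨χ, fun _ => ⟨χ_strict, equivMod_iff.2 fun M _ _ => ?_⟩⟩
        have := nonempty_of_structure M
        rw [χ_iff, Sentence.realize_inf]
      · exact ⟨⊥, fun h => absurd h hx⟩
  exact ⟨conj, hconj, fun φ ψ hφ hψ => conj_spec (φ, ψ) ⟨hφ, hψ⟩⟩

/-- A limit computable descending chain of true `Π₁` sentences, starting from a theorem of `T`,
that eventually leaves the consequences of every sentence consistent with `T`. -/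
structure IsPi1Chain (T : L.Theory) (τ : ℕ → Sent) : Prop where
  limitComputable : LimitComputable τ
  strictPi1 (n : ℕ) : StrictPi1 (τ n)
  trueInN (n : ℕ) : TrueInN (τ n)
  prov_zero : Prov T (τ 0)
  implies_succ (n : ℕ) : Implies T (τ (n + 1)) (τ n)
  exists_not_implies {φ : Sent} (hφ : ConsistentWith T φ) : ∃ n, ¬ Implies T φ (τ n)

theorem exists_limitComputable_pi1_step (hT : RecursivelyAxiomatized T)
    (hsound : Sound T) (hpi : ∀ ψ, StrictPi1 ψ → ConsistentWith T ψ → TrueInN ψ) :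
    ∃ step : Sent × Sent → Sent, LimitComputable step ∧ ∀ φ ψ, StrictPi1 φ → TrueInN φ →
      StrictPi1 (step (φ, ψ)) ∧ TrueInN (step (φ, ψ)) ∧ Implies T (step (φ, ψ)) φ ∧
        (StrictPi1 ψ → ConsistentWith T ψ → Implies T (step (φ, ψ)) ψ) := by
  classical
  obtain ⟨conj, hconj, conj_spec⟩ := exists_limitComputable_strictPi1_inf hT
  have hsnd : LimitComputable fun x : Sent × Sent => x.2 := .of_primrec .snd
  refine ⟨fun x => if StrictPi1 x.2 ∧ ConsistentWith T x.2 then conj x else x.1,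
    .ite (((LimitDecidable.of_primrecPred primrecPred_strictPi1).comp hsnd).and
      ((limitDecidable_consistentWith hT).comp hsnd)) hconj (.of_primrec .fst), ?_⟩
  intro φ ψ hφ hφ_true
  dsimp only
  split_ifs with hψ
  · obtain ⟨hstrict, hequiv⟩ := conj_spec φ ψ hφ hψ.1
    obtain ⟨hto, hof⟩ := equivMod_iff_implies.1 hequiv
    have hinf : TrueInN (φ ⊓ ψ) := (Sentence.realize_inf _).2 ⟨hφ_true, hpi ψ hψ.1 hψ.2⟩
    exact ⟨hstrict, hsound.trueInN_of_implies hof hinf, hto.trans implies_inf_left,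
      fun _ _ => hto.trans implies_inf_right⟩
  · exact ⟨hφ, hφ_true, implies_refl, fun h h' => absurd ⟨h, h'⟩ hψ⟩

theorem exists_isPi1Chain (hT_sound : Sound T) (hT_rec : RecursivelyAxiomatized T)
    (hea : IsEA ea) (hext : ea ⊆ T) (hcon : IsConOperator T con) : ∃ τ, IsPi1Chain T τ := by
  obtain ⟨step, hstep, step_spec⟩ := exists_limitComputable_pi1_step hT_rec hT_sound
    fun ψ hψ => (isPi1_of_strictPi1 hψ).trueInN_of_consistentWith hea hext
  let sent (n : ℕ) : Sent := (Encodable.decode n).getD ⊥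
  let τ (n : ℕ) : Sent := Nat.rec (∼⊥) (fun n φ => step (φ, sent n)) n
  have hτ : LimitComputable τ := by
    have hsent : LimitComputable sent :=
      .of_primrec (Primrec.option_getD.comp .decode (.const ⊥))
    exact (LimitComputable.nat_rec (α := Unit) (.of_primrec (.const (∼⊥)))
      (hstep.comp (.pair (.of_primrec (.comp .snd .snd))
        (hsent.comp (.of_primrec (.comp .fst .snd)))))).comp (.of_primrec (.pair (.const ()) .id))
  have τ_zero (M : Type) [L.Structure M] : M ⊨ τ 0 := (Sentence.realize_not _).2 id
  have τ_spec (n : ℕ) : StrictPi1 (τ n) ∧ TrueInN (τ n) := by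
    induction n with
    | zero => exact ⟨rfl, τ_zero ℕ⟩
    | succ n ih =>
      have h := step_spec (τ n) (sent n) ih.1 ih.2
      exact ⟨h.1, h.2.1⟩
  have τ_succ (n : ℕ) : Implies T (τ (n + 1)) (τ n) ∧
      (StrictPi1 (sent n) → ConsistentWith T (sent n) → Implies T (τ (n + 1)) (sent n)) :=
    (step_spec (τ n) (sent n) (τ_spec n).1 (τ_spec n).2).2.2
  refine ⟨τ, hτ, fun n => (τ_spec n).1, fun n => (τ_spec n).2, prov_iff.2 fun M _ _ => τ_zero M,
    fun n => (τ_succ n).1, fun {φ} hφ => ?_⟩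
  obtain ⟨π, π_strict, π_true, hπ⟩ := hcon.exists_strictPi1_not_implies hφ
  have sent_encode : sent (Encodable.encode π) = π := by simp [sent]
  have hτπ : Implies T (τ (Encodable.encode π + 1)) π := by
    simpa only [sent_encode, π_strict, hT_sound.consistentWith π_true, forall_const] using
      (τ_succ (Encodable.encode π)).2
  exact ⟨Encodable.encode π + 1, fun h => hπ (h.trans hτπ)⟩

end Chain

/-! ### An operator following a chain -/

section Operator

open Encodable

variable {T : L.Theory} {τ : ℕ → Sent} {con : Sent → Sent} {φ ψ χ ρ : Sent}

/-- The first index at which the chain `τ` leaves the consequences of `φ`; it is `0` when `φ` is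
inconsistent with `T`. -/
noncomputable def exitIndex (T : L.Theory) (τ : ℕ → Sent) (φ : Sent) : ℕ :=
  sInf {n | ¬ Implies T φ (τ n)}

/-- `φ` is elusive at stage `n` if no sentence with code below `n` implies `φ` consistently once
`τ n` is added to it. -/
def Elusive (T : L.Theory) (τ : ℕ → Sent) (n : ℕ) (φ : Sent) : Prop :=
  ∀ ζ : Sent, encode ζ < n → ConsistentWith T (ζ ⊓ τ n) → ¬ Implies T (ζ ⊓ τ n) φ

open Classical in
/-- The operator returning the first element of the chain that `φ` does not imply when `φ` is
elusive, and the last element that `φ` does imply otherwise; inconsistent `φ` are sent to `⊥`. -/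
noncomputable def chainOperator (T : L.Theory) (τ : ℕ → Sent) (φ : Sent) : Sent :=
  if ConsistentWith T φ then
    if Elusive T τ (exitIndex T τ φ) φ then τ (exitIndex T τ φ) else τ (exitIndex T τ φ - 1)
  else ⊥

theorem implies_of_lt_exitIndex {n : ℕ} (h : n < exitIndex T τ φ) : Implies T φ (τ n) :=
  not_not.1 (Nat.notMem_of_lt_sInf h)

theorem Elusive.of_implies {n : ℕ} (hφ : Elusive T τ n φ) (h : Implies T ψ φ) :
    Elusive T τ n ψ :=
  fun ζ hζ hcons hψ => hφ ζ hζ hcons (hψ.trans h)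

namespace IsPi1Chain

theorem implies_of_le (hτ : IsPi1Chain T τ) {m n : ℕ} (h : m ≤ n) : Implies T (τ n) (τ m) :=
  Nat.le_induction implies_refl (fun n _ ih => (hτ.implies_succ n).trans ih) n h

theorem isLeast_exitIndex (hτ : IsPi1Chain T τ) (hφ : ConsistentWith T φ) :
    IsLeast {n | ¬ Implies T φ (τ n)} (exitIndex T τ φ) :=
  ⟨Nat.sInf_mem (hτ.exists_not_implies hφ), fun _ => Nat.sInf_le⟩

theorem exitIndex_pos (hτ : IsPi1Chain T τ) (hφ : ConsistentWith T φ) : 0 < exitIndex T τ φ := by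
  refine Nat.pos_of_ne_zero fun h => (hτ.isLeast_exitIndex hφ).1 ?_
  rw [h]
  exact implies_iff.2 fun M _ hM _ => prov_iff.1 hτ.prov_zero M hM

theorem exitIndex_eq_succ (hτ : IsPi1Chain T τ) {n : ℕ} (h : Implies T φ (τ n))
    (h' : ¬ Implies T φ (τ (n + 1))) : exitIndex T τ φ = n + 1 :=
  IsLeast.csInf_eq ⟨h', fun _ hk => not_le.1 fun hkn => hk (h.trans (hτ.implies_of_le hkn))⟩

theorem strictPi1_chainOperator (hτ : IsPi1Chain T τ) (φ : Sent) :
    StrictPi1 (chainOperator T τ φ) := by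
  unfold chainOperator
  split_ifs
  exacts [hτ.strictPi1 _, hτ.strictPi1 _, rfl]

theorem chainOperator_of_elusive {n : ℕ} (hτ : IsPi1Chain T τ) (hφ : ConsistentWith T φ)
    (h : Implies T φ (τ n)) (h' : ¬ Implies T φ (τ (n + 1))) (hel : Elusive T τ (n + 1) φ) :
    chainOperator T τ φ = τ (n + 1) := by
  rw [chainOperator, if_pos hφ, hτ.exitIndex_eq_succ h h', if_pos hel]

theorem chainOperator_of_not_elusive {n : ℕ} (hτ : IsPi1Chain T τ) (hφ : ConsistentWith T φ)
    (h : Implies T φ (τ n)) (h' : ¬ Implies T φ (τ (n + 1))) (hel : ¬ Elusive T τ (n + 1) φ) :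
    chainOperator T τ φ = τ n := by
  rw [chainOperator, if_pos hφ, hτ.exitIndex_eq_succ h h', if_neg hel, Nat.add_sub_cancel]

theorem exists_exit (hτ : IsPi1Chain T τ) (hφ : ConsistentWith T φ) :
    ∃ n, Implies T φ (τ n) ∧ ¬ Implies T φ (τ (n + 1)) := by
  obtain ⟨n, hn⟩ := Nat.exists_eq_add_of_lt (hτ.exitIndex_pos hφ)
  rw [Nat.zero_add] at hn
  exact ⟨n, implies_of_lt_exitIndex (hn ▸ n.lt_succ_self), hn ▸ (hτ.isLeast_exitIndex hφ).1⟩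

theorem monotone'_chainOperator (hτ : IsPi1Chain T τ) : Monotone' T (chainOperator T τ) := by
  intro φ ψ h
  rw [prov_imp_iff] at h ⊢
  by_cases hφ : ConsistentWith T φ
  swap
  · rw [chainOperator, if_neg hφ]
    exact implies_iff.2 fun _ _ _ => False.elim
  obtain ⟨m, hφm, hφm'⟩ := hτ.exists_exit hφ
  obtain ⟨n, hψn, hψn'⟩ := hτ.exists_exit (hφ.of_implies h)
  have hnm : n ≤ m := by
    by_contra! hlt
    exact hφm' (h.trans (hψn.trans (hτ.implies_of_le hlt)))
  have hφ_ge : Implies T (chainOperator T τ φ) (τ m) := by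
    by_cases hel : Elusive T τ (m + 1) φ
    · exact hτ.chainOperator_of_elusive hφ hφm hφm' hel ▸ hτ.implies_succ m
    · exact hτ.chainOperator_of_not_elusive hφ hφm hφm' hel ▸ implies_refl
  by_cases hel : Elusive T τ (n + 1) ψ
  · rw [hτ.chainOperator_of_elusive (hφ.of_implies h) hψn hψn' hel]
    obtain rfl | hlt := hnm.eq_or_lt
    · rw [hτ.chainOperator_of_elusive hφ hφm hφm' (hel.of_implies h)]
      exact implies_refl
    · exact hφ_ge.trans (hτ.implies_of_le hlt)
  · rw [hτ.chainOperator_of_not_elusive (hφ.of_implies h) hψn hψn' hel]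
    exact hφ_ge.trans (hτ.implies_of_le hnm)

theorem limitComputable_exitIndex (hτ : IsPi1Chain T τ) (hT : RecursivelyAxiomatized T) :
    LimitComputable (exitIndex T τ) := by
  have hφτ : LimitComputable fun x : Sent × ℕ => (x.1, τ x.2) :=
    .pair (.of_primrec .fst) (hτ.limitComputable.comp (.of_primrec .snd))
  refine .of_isLeast (p := fun φ n => ConsistentWith T φ → ¬ Implies T φ (τ n))
    (((limitDecidable_consistentWith hT).comp (.of_primrec .fst)).imp
      ((limitDecidable_implies hT).comp hφτ).not) fun φ => ?_
  by_cases hφ : ConsistentWith T φ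
  · simpa only [hφ, forall_const] using hτ.isLeast_exitIndex hφ
  · have himp (n : ℕ) : Implies T φ (τ n) :=
      (not_not.1 hφ).trans (implies_iff.2 fun _ _ _ => False.elim)
    simp [exitIndex, hφ, himp]

theorem limitDecidable_elusive (hτ : IsPi1Chain T τ) (hT : RecursivelyAxiomatized T) :
    LimitDecidable fun x : Sent × ℕ => Elusive T τ x.2 x.1 := by
  have hinf : LimitComputable fun x : ((Sent × ℕ) × ℕ) × Sent => x.2 ⊓ τ x.1.1.2 :=
    .comp₂ primrec_inf.to_comp (.of_primrec .snd)
      (hτ.limitComputable.comp (.of_primrec (.comp .snd (.comp .fst .fst))))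
  have hcode : LimitDecidable fun x : ((Sent × ℕ) × ℕ) × Sent => encode x.2 = x.1.2 :=
    .of_primrecPred (Primrec.eq.comp (.comp .encode .snd) (.comp .snd .fst))
  have himp : LimitDecidable fun x : ((Sent × ℕ) × ℕ) × Sent =>
      ConsistentWith T (x.2 ⊓ τ x.1.1.2) ∧ Implies T (x.2 ⊓ τ x.1.1.2) x.1.1.1 :=
    ((limitDecidable_consistentWith hT).comp hinf).and ((limitDecidable_implies hT).comp
      (hinf.pair (.of_primrec (.comp .fst (.comp .fst .fst)))))
  have hdecode : Computable fun x : (Sent × ℕ) × ℕ => (decode x.2 : Option Sent) :=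
    Computable.decode.comp .snd
  let Captured (x : Sent × ℕ) (k : ℕ) : Prop := ∃ ζ ∈ (decode k : Option Sent),
    encode ζ = k ∧ ConsistentWith T (ζ ⊓ τ x.2) ∧ Implies T (ζ ⊓ τ x.2) x.1
  have hCaptured : LimitDecidable fun z : (Sent × ℕ) × ℕ => ¬ Captured z.1 z.2 :=
    (LimitDecidable.exists_mem hdecode (hcode.and himp)).not
  refine ((LimitDecidable.forall_lt (p := fun x k => ¬ Captured x k) hCaptured).comp
    (.of_primrec (.pair .id .snd))).of_iff fun x => ?_
  simp only [Elusive, Captured, not_exists, not_and, id]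
  constructor
  · rintro h _ hk ζ - rfl
    exact h ζ hk
  · exact fun h ζ hζ => h _ hζ ζ (encodek ζ) rfl

theorem limitComputable_chainOperator (hτ : IsPi1Chain T τ) (hT : RecursivelyAxiomatized T) :
    LimitComputable (chainOperator T τ) := by
  classical
  have hexit := hτ.limitComputable_exitIndex hT
  exact .ite (limitDecidable_consistentWith hT)
    (.ite ((hτ.limitDecidable_elusive hT).comp (.pair (.of_primrec .id) hexit))
      (hτ.limitComputable.comp hexit)
      (hτ.limitComputable.comp ((LimitComputable.of_primrec Primrec.pred).comp hexit)))
    (.of_primrec (.const ⊥))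

theorem exists_equivMod_inf_chainOperator_self (hτ : IsPi1Chain T τ) (hT : Sound T)
    (hχ : TrueInN χ) :
    ∃ φ, TrueInN φ ∧ Implies T φ χ ∧ EquivMod T (φ ⊓ chainOperator T τ φ) φ := by
  have true_inf (n : ℕ) : TrueInN (χ ⊓ τ n) := (Sentence.realize_inf _).2 ⟨hχ, hτ.trueInN n⟩
  obtain ⟨n, hn, hn'⟩ := hτ.exists_exit (hT.consistentWith (true_inf (encode χ)))
  have hlt : encode χ < n + 1 := by
    by_contra! hle
    exact hn' (implies_inf_right.trans (hτ.implies_of_le hle))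
  have hle : Implies T (χ ⊓ τ (encode χ)) (χ ⊓ τ n) := implies_inf_left.inf hn
  have not_elusive : ¬ Elusive T τ (n + 1) (χ ⊓ τ n) := fun hel =>
    hel χ hlt (hT.consistentWith (true_inf _))
      (implies_inf_left.inf (implies_inf_right.trans (hτ.implies_succ n)))
  refine ⟨χ ⊓ τ n, true_inf n, implies_inf_left, ?_⟩
  rw [hτ.chainOperator_of_not_elusive (hT.consistentWith (true_inf n)) implies_inf_right
    (fun h => hn' (hle.trans h)) not_elusive]
  exact equivMod_iff_implies.2 ⟨implies_inf_left, implies_refl.inf implies_inf_right⟩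

theorem exists_inf_con_implies (hτ : IsPi1Chain T τ) (hT : Sound T) (hcon : IsConOperator T con)
    (hχ : TrueInN χ) :
    ∃ φ n, TrueInN φ ∧ Implies T φ χ ∧ Implies T φ (τ n) ∧ ¬ Implies T φ (τ (n + 1)) ∧
      Implies T (φ ⊓ con χ) (τ (n + 1)) := by
  have hcons : ConsistentWith T (χ ⊓ ∼(con χ)) :=
    not_implies_iff_consistentWith_inf_not.1 (hcon.goedel2 χ (hT.consistentWith hχ))
  obtain ⟨n, hn, hn'⟩ := hτ.exists_exit hcons
  refine ⟨χ ⊓ τ n ⊓ (con χ ⟹ τ (n + 1)), n, ?_, implies_inf_left.trans implies_inf_left,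
    implies_inf_left.trans implies_inf_right, fun h => hn' (.trans ?_ h), ?_⟩
  · simp only [TrueInN, Sentence.realize_inf, Sentence.realize_imp]
    exact ⟨⟨hχ, hτ.trueInN n⟩, fun _ => hτ.trueInN _⟩
  · refine (implies_inf_left.inf hn).inf (implies_iff.2 fun M _ _ h => ?_)
    simp only [Sentence.realize_inf, Sentence.realize_imp, Sentence.realize_not] at h ⊢
    exact fun h' => absurd h' h.2
  · refine implies_iff.2 fun M _ _ h => ?_
    simp only [Sentence.realize_inf, Sentence.realize_imp] at h
    exact h.1.2 h.2

theorem exists_elusive_of_implies (hcon : IsConOperator T con) (n : ℕ) :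
    ∃ σ, TrueInN σ ∧ ∀ φ, Implies T (φ ⊓ τ n) σ → Elusive T τ n φ := by
  let S : Set Sent := {ζ | encode ζ < n ∧ ConsistentWith T (ζ ⊓ τ n)}
  have : Finite S :=
    (((Set.finite_lt_nat n).preimage encode_injective.injOn).subset fun ζ hζ => hζ.1).to_subtype
  let σ : Sent := BoundedFormula.iInf fun ζ : S => con (ζ ⊓ τ n)
  have realize_σ (M : Type) [L.Structure M] : M ⊨ σ ↔ ∀ ζ : S, M ⊨ con (ζ ⊓ τ n) :=
    BoundedFormula.realize_iInf
  refine ⟨σ, (realize_σ ℕ).2 fun ζ => (hcon.true_iff _).2 ζ.2.2, fun φ hφ ζ hζ hcons himp => ?_⟩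
  have hσ : Implies T σ (con (ζ ⊓ τ n)) :=
    implies_iff.2 fun M _ _ h => (realize_σ M).1 h ⟨ζ, hζ, hcons⟩
  exact hcon.goedel2 _ hcons (((himp.inf implies_inf_right).trans hφ).trans hσ)

end IsPi1Chain

theorem IsConOperator.exists_inf_implies_con (hcon : IsConOperator T con) {σ : Sent}
    (hχ : TrueInN χ) (hσ : TrueInN σ) (hχρ : ¬ Implies T χ ρ) :
    ∃ φ, TrueInN φ ∧ Implies T φ χ ∧ ¬ Implies T φ ρ ∧ Implies T (φ ⊓ ρ) σ ∧
      Implies T (φ ⊓ ρ) (con φ) := by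
  let φ : Sent := χ ⊓ (ρ ⟹ con (χ ⊓ ∼ρ) ⊓ σ)
  have realize_φ (M : Type) [L.Structure M] :
      M ⊨ φ ↔ M ⊨ χ ∧ (M ⊨ ρ → M ⊨ con (χ ⊓ ∼ρ) ∧ M ⊨ σ) := by
    simp only [φ, Sentence.realize_inf, Sentence.realize_imp]
  have hcons := not_implies_iff_consistentWith_inf_not.1 hχρ
  have hφ : Implies T (χ ⊓ ∼ρ) φ := implies_iff.2 fun M _ _ h => by
    simp only [Sentence.realize_inf, Sentence.realize_not] at h
    exact (realize_φ M).2 ⟨h.1, fun hρ => absurd hρ h.2⟩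
  have hφρ : Implies T (φ ⊓ ρ) (con (χ ⊓ ∼ρ) ⊓ σ) := implies_iff.2 fun M _ _ h => by
    rw [Sentence.realize_inf] at h ⊢
    exact ((realize_φ M).1 h.1).2 h.2
  refine ⟨φ, (realize_φ ℕ).2 ⟨hχ, fun _ => ⟨(hcon.true_iff _).2 hcons, hσ⟩⟩, implies_inf_left,
    fun h => ?_, hφρ.trans implies_inf_right,
    (hφρ.trans implies_inf_left).trans (hcon.implies_of_implies hφ)⟩
  exact hcons (implies_iff.2 fun M _ hM hM' => (Sentence.realize_not M).1
    ((Sentence.realize_inf M).1 hM').2 (implies_iff.1 (hφ.trans h) M hM hM'))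

theorem IsPi1Chain.exists_equivMod_inf_chainOperator_con (hτ : IsPi1Chain T τ) (hT : Sound T)
    (hcon : IsConOperator T con) (hχ : TrueInN χ) :
    ∃ φ, TrueInN φ ∧ Implies T φ χ ∧ EquivMod T (φ ⊓ chainOperator T τ φ) (φ ⊓ con φ) := by
  obtain ⟨χ', n, χ'_true, χ'_χ, hn, hn', χ'_con⟩ := hτ.exists_inf_con_implies hT hcon hχ
  obtain ⟨σ, σ_true, hσ⟩ := exists_elusive_of_implies (τ := τ) hcon (n + 1)
  obtain ⟨φ, φ_true, φ_χ', φ_τ, φ_σ, φ_con⟩ :=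
    hcon.exists_inf_implies_con χ'_true σ_true hn'
  refine ⟨φ, φ_true, φ_χ'.trans χ'_χ, ?_⟩
  rw [hτ.chainOperator_of_elusive (hT.consistentWith φ_true) (φ_χ'.trans hn) φ_τ (hσ φ φ_σ)]
  have con_φ_χ : Implies T (con φ) (con χ) := hcon.implies_of_implies (φ_χ'.trans χ'_χ)
  exact equivMod_iff_implies.2 ⟨implies_inf_left.inf φ_con, implies_inf_left.inf
    (((implies_inf_left.trans φ_χ').inf (implies_inf_right.trans con_φ_χ)).trans χ'_con)⟩

end Operator

section Transfer

variable {T : L.Theory} {φ ψ ψ' χ : Sent} {g h : Sent → Sent}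

theorem EquivMod.inf_congr_right (hψ : EquivMod T ψ ψ') (h : EquivMod T (φ ⊓ ψ') χ) :
    EquivMod T (φ ⊓ ψ) χ :=
  equivMod_iff.2 fun M _ hM => by
    rw [← equivMod_iff.1 h M hM, Sentence.realize_inf, Sentence.realize_inf,
      equivMod_iff.1 hψ M hM]

theorem Monotone'.of_equivMod (hh : Monotone' T h) (hgh : ∀ φ, EquivMod T (g φ) (h φ)) :
    Monotone' T g := fun φ ψ hφψ =>
  have hg := fun φ => equivMod_iff_implies.1 (hgh φ)
  prov_imp_iff.2 (((hg φ).1.trans (prov_imp_iff.1 (hh φ ψ hφψ))).trans (hg ψ).2)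

theorem LimitComputable.exists_computable₂_gnum (hg : LimitComputable g) :
    ∃ F : ℕ → ℕ → ℕ, Computable₂ F ∧ ∀ φ, ∃ N, ∀ m ≥ N, F m (gnum φ) = gnum (g φ) := by
  obtain ⟨d, hd, hdg⟩ := LimitComputable.exists_leftInverse primrec_gnum.to_comp gnum_injective
  obtain ⟨F, hF, limF⟩ := (of_primrec primrec_gnum).comp (hg.comp hd)
  refine ⟨F, hF, fun φ => Filter.eventually_atTop.1 ?_⟩
  simpa only [hdg φ] using limF (gnum φ)

end Transfer

/-- Walsh.  There is a limit-recursive (recursive in the halting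
problem, via the Shoenfield limit lemma, but not recursive) monotone function `g` with
`Π₁` values which agrees with the consistency operator on arbitrarily strong true
sentences and agrees with the identity operator on arbitrarily strong true sentences
(cofinally in the ultrafilter of true sentences ordered by implication over `T`). -/
theorem statement_5
    (T ea : L.Theory) (hT_sound : Sound T) (hT_rec : RecursivelyAxiomatized T)
    (hea : IsEA ea) (hext : ea ⊆ T)
    (con : Sent → Sent) (hcon : IsConOperator T con) :
    ∃ g : Sent → Sent,
      (∃ F : ℕ → ℕ → ℕ, Computable₂ F ∧
        ∀ φ : Sent, ∃ N, ∀ m ≥ N, F m (gnum φ) = gnum (g φ)) ∧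
      ¬ RecursiveFn g ∧
      Monotone' T g ∧
      (∀ φ : Sent, IsPi1 (g φ)) ∧
      (∀ χ : Sent, TrueInN χ → ∃ φ : Sent, TrueInN φ ∧ Implies T φ χ ∧
        EquivMod T (φ ⊓ g φ) (φ ⊓ con φ)) ∧
      (∀ χ : Sent, TrueInN χ → ∃ φ : Sent, TrueInN φ ∧ Implies T φ χ ∧
        EquivMod T (φ ⊓ g φ) φ) := by
  obtain ⟨τ, hτ⟩ := exists_isPi1Chain hT_sound hT_rec hea hext hcon
  obtain ⟨g, g_lim, g_nonrec, g_pi, g_equiv⟩ := exists_equivMod_not_recursiveFn hT_rec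
    (hτ.limitComputable_chainOperator hT_rec) hτ.strictPi1_chainOperator
  refine ⟨g, g_lim.exists_computable₂_gnum, g_nonrec,
    hτ.monotone'_chainOperator.of_equivMod g_equiv, g_pi, fun χ hχ => ?_, fun χ hχ => ?_⟩
  · obtain ⟨φ, φ_true, φ_χ, hφ⟩ := hτ.exists_equivMod_inf_chainOperator_con hT_sound hcon hχ
    exact ⟨φ, φ_true, φ_χ, (g_equiv φ).inf_congr_right hφ⟩
  · obtain ⟨φ, φ_true, φ_χ, hφ⟩ := hτ.exists_equivMod_inf_chainOperator_self hT_sound hχ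
    exact ⟨φ, φ_true, φ_χ, (g_equiv φ).inf_congr_right hφ⟩

end ArithFormalization
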